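/- arXiv:2301.09616 — 6 statements merged into one kernel-verified Lean document; each statement's English description precedes it below -/
import Mathlib

section
/- Let H be a real Hilbert space and T : H → H a positive semidefinite compact operator, with λ_j(T), j ≥ 1, its eigenvalues counted with multiplicity and sorted in non-increasing order. Suppose {ψ_k}_{k∈I} is an orthonormal basis for H and the index set I is partitioned as I = I_low ∪ I_res ∪ I_hi with I_low and I_res finite, such that for some ε ∈ (0,1/2): Σ_{k∈I_hi} ‖Tψ_k‖² + Σ_{k∈I_low} ‖(Id − T)ψ_k‖² ≤ ε². Let M_ε(T) = #{j : λ_j(T) > ε} and N_ε(T) = #{j : λ_j(T) ∈ (ε, 1−ε)}. Then N_ε(T) ≤ #(I_res) and |M_ε(T) − #(I_low)| ≤ #(I_res). -/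
open MeasureTheory
open scoped RealInnerProductSpace ENNReal

/-- `lam : ℕ → ℝ` is the non-increasing sequence of positive eigenvalues of the
positive semidefinite compact operator `T`, counted with multiplicity and padded by
zeros: `lam` is antitone and nonnegative, and there is a family `f` of pairwise
orthogonal vectors, of norm one wherever `lam` is nonzero, with `T f_k = lam_k f_k`,
such that every eigenvector of `T` with nonzero eigenvalue `μ` lies in the span of
`{f_k : lam_k = μ}` (this pins down the multiplicity of every nonzero eigenvalue). -/
def IsEigSeqH {H : Type*} [NormedAddCommGroup H] [InnerProductSpace ℝ H]
    (T : H →L[ℝ] H) (lam : ℕ → ℝ) : Prop :=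
  Antitone lam ∧ (∀ k, 0 ≤ lam k) ∧
  ∃ f : ℕ → H,
    (∀ k, lam k ≠ 0 → ‖f k‖ = 1) ∧
    (∀ k l, k ≠ l → ⟪f k, f l⟫ = 0) ∧
    (∀ k, T (f k) = lam k • f k) ∧
    (∀ μ : ℝ, μ ≠ 0 → ∀ g : H, T g = μ • g →
      g ∈ Submodule.span ℝ {h : H | ∃ k, lam k = μ ∧ h = f k})

/-! Let `V` and `W` be the spans of the `ψ k` with `k ∈ Ilow` and `k ∈ Ires`. The hypothesis bounds
the Hilbert–Schmidt norm of `(T - P_V) P_{Wᗮ}` by `ε`, so `‖T x - P_V x‖ ≤ ε ‖x‖` for `x ∈ Wᗮ`.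
The counts follow from three dimension comparisons, each obtained by showing that a subspace meets
the orthogonal complement of another one trivially:
* a nonzero `x` in the span of the eigenvectors with eigenvalue `> ε` has `‖T x‖ > ε ‖x‖`, which
  is impossible in `(V ⊔ W)ᗮ`, so `M ≤ #Ilow + #Ires`;
* for `x` in the span of the eigenvectors with eigenvalue in `(ε, 1 - ε)`,
  `‖T x - x / 2‖ < (1 / 2 - ε) ‖x‖`, whereas `‖P_V x - x / 2‖ = ‖x‖ / 2`; so this span meets `Wᗮ`
  trivially and `N ≤ #Ires`;
* on the orthogonal complement of the eigenvectors with eigenvalue `> ε` the quadratic form of `T`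
  is at most `ε ‖x‖²`, whereas on `V` it is at least `(1 - ε) ‖x‖²`; since `ε < 1 / 2`,
  `#Ilow ≤ M`. -/

open Submodule
open scoped InnerProductSpace

section InnerProductSpace

variable {𝕜 E F ι κ : Type*} [RCLike 𝕜] [NormedAddCommGroup E] [InnerProductSpace 𝕜 E]

theorem norm_sq_sum_smul_of_orthonormal {g : κ → E} (hg : Orthonormal 𝕜 g) (c : κ → 𝕜)
    (s : Finset κ) : ‖∑ i ∈ s, c i • g i‖ ^ 2 = ∑ i ∈ s, ‖c i‖ ^ 2 := by
  rw [← inner_self_eq_norm_sq (𝕜 := 𝕜), hg.inner_sum, map_sum]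
  exact Finset.sum_congr rfl fun i _ => by
    rw [RCLike.conj_mul, ← RCLike.ofReal_pow, RCLike.ofReal_re]

theorem norm_apply_lt_of_mem_span_range_orthonormal {g : κ → E} (hg : Orthonormal 𝕜 g)
    {A B : E →ₗ[𝕜] E} {a b : κ → 𝕜} (hA : ∀ k, A (g k) = a k • g k)
    (hB : ∀ k, B (g k) = b k • g k) (hab : ∀ k, ‖a k‖ < ‖b k‖)
    {v : E} (hv : v ∈ span 𝕜 (Set.range g)) (hv0 : v ≠ 0) : ‖A v‖ < ‖B v‖ := by
  obtain ⟨c, rfl⟩ := Finsupp.mem_span_range_iff_exists_finsupp.mp hv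
  have norm_sq_apply : ∀ {L : E →ₗ[𝕜] E} {l : κ → 𝕜}, (∀ k, L (g k) = l k • g k) →
      ‖L (c.sum fun k x => x • g k)‖ ^ 2 = ∑ k ∈ c.support, ‖c k * l k‖ ^ 2 := by
    intro L l hL
    simp only [Finsupp.sum, map_sum, map_smul, hL, smul_smul]
    exact norm_sq_sum_smul_of_orthonormal hg _ _
  refine lt_of_pow_lt_pow_left₀ 2 (norm_nonneg _) ?_
  rw [norm_sq_apply hA, norm_sq_apply hB]
  refine Finset.sum_lt_sum_of_nonempty (Finsupp.support_nonempty_iff.mpr ?_) fun k hk => ?_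
  · rintro rfl
    simp at hv0
  · have hck : 0 < ‖c k‖ := norm_pos_iff.mpr (Finsupp.mem_support_iff.mp hk)
    rw [norm_mul, norm_mul]
    gcongr
    exact hab k

theorem opNorm_le_of_sum_norm_sq_le [SeminormedAddCommGroup F] [NormedSpace 𝕜 F] {ψ : ι → E}
    (hψ : Orthonormal 𝕜 ψ) (hdense : (span 𝕜 (Set.range ψ)).topologicalClosure = ⊤)
    {S : E →L[𝕜] F} {C : ℝ} (hC : 0 ≤ C) (hS : ∀ s : Finset ι, ∑ k ∈ s, ‖S (ψ k)‖ ^ 2 ≤ C ^ 2) :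
    ‖S‖ ≤ C := by
  refine S.opNorm_le_bound hC fun v => ?_
  have hv : v ∈ closure (span 𝕜 (Set.range ψ) : Set E) := by
    rw [← topologicalClosure_coe, hdense]
    trivial
  have hclosed : IsClosed {w | ‖S w‖ ≤ C * ‖w‖} := isClosed_le (by fun_prop) (by fun_prop)
  refine closure_minimal (fun w hw => ?_) hclosed hv
  change ‖S w‖ ≤ C * ‖w‖
  obtain ⟨c, rfl⟩ := Finsupp.mem_span_range_iff_exists_finsupp.mp hw
  have norm_apply_le : ‖S (c.sum fun k x => x • ψ k)‖ ≤ ∑ k ∈ c.support, ‖S (ψ k)‖ * ‖c k‖ := by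
    simp only [Finsupp.sum, map_sum, map_smul]
    exact norm_sum_le_of_le _ fun k _ => by rw [norm_smul, mul_comm]
  refine le_of_sq_le_sq ?_ (by positivity)
  calc ‖S (c.sum fun k x => x • ψ k)‖ ^ 2
      ≤ (∑ k ∈ c.support, ‖S (ψ k)‖ * ‖c k‖) ^ 2 := by gcongr
    _ ≤ (∑ k ∈ c.support, ‖S (ψ k)‖ ^ 2) * ∑ k ∈ c.support, ‖c k‖ ^ 2 :=
        Finset.sum_mul_sq_le_sq_mul_sq _ _ _
    _ ≤ C ^ 2 * ‖c.sum fun k x => x • ψ k‖ ^ 2 := by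
        rw [Finsupp.sum, norm_sq_sum_smul_of_orthonormal hψ]
        gcongr
        exact hS _
    _ = (C * ‖c.sum fun k x => x • ψ k‖) ^ 2 := by ring

theorem span_image_isOrtho_of_disjoint {ψ : ι → E} (hψ : Orthonormal 𝕜 ψ) {A B : Set ι}
    (hAB : Disjoint A B) : span 𝕜 (ψ '' A) ⟂ span 𝕜 (ψ '' B) := by
  rw [isOrtho_span]
  rintro _ ⟨i, hi, rfl⟩ _ ⟨j, hj, rfl⟩
  exact hψ.inner_eq_zero (hAB.ne_of_mem hi hj)

theorem mem_orthogonal_span_image_of_notMem {ψ : ι → E} (hψ : Orthonormal 𝕜 ψ) {A : Set ι} {k : ι}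
    (hk : k ∉ A) : ψ k ∈ (span 𝕜 (ψ '' A))ᗮ :=
  span_image_isOrtho_of_disjoint hψ (Set.disjoint_singleton_left.mpr hk)
    (subset_span (Set.mem_image_of_mem ψ rfl))

theorem norm_starProjection_sub_half_smul (V : Submodule 𝕜 E) [V.HasOrthogonalProjection] (x : E) :
    ‖V.starProjection x - ((1 / 2 : ℝ) : 𝕜) • x‖ = 1 / 2 * ‖x‖ := by
  have : V.starProjection x - ((1 / 2 : ℝ) : 𝕜) • x = ((1 / 2 : ℝ) : 𝕜) • V.reflection x := by
    rw [reflection_apply]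
    push_cast
    module
  rw [this, norm_smul, LinearIsometryEquiv.norm_map]
  simp

theorem encard_le_encard_of_mem_orthogonal_imp_eq_zero {g : κ → E} {ψ : ι → E} {A : Set κ}
    {B : Set ι} (hg : LinearIndepOn 𝕜 g A)
    (h : ∀ x ∈ span 𝕜 (g '' A), x ∈ (span 𝕜 (ψ '' B))ᗮ → x = 0) : A.encard ≤ B.encard := by
  rcases B.finite_or_infinite with hB | hB
  swap
  · simp [hB.encard_eq]
  set W := span 𝕜 (ψ '' B)
  have : FiniteDimensional 𝕜 W := .span_of_finite 𝕜 (hB.image ψ)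
  have hproj : LinearIndepOn 𝕜 (W.orthogonalProjectionOnto ∘ g) A :=
    hg.map (f := W.orthogonalProjectionOnto.toLinearMap) <| by
      rw [← Set.image_eq_range, ker_orthogonalProjectionOnto]
      exact disjoint_def.mpr h
  calc A.encard ≤ (Module.rank 𝕜 W).toENat := hproj.encard_le_toENat_rank
    _ ≤ (Cardinal.mk (ψ '' B)).toENat := by
        gcongr; exact rank_span_le _
    _ = (ψ '' B).encard := rfl
    _ ≤ B.encard := Set.encard_image_le ψ B

theorem norm_apply_sq_le_of_isPositive {S : E →L[𝕜] E} (hS : S.IsPositive) (x : E) :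
    ‖S x‖ ^ 2 ≤ ‖S‖ * RCLike.re ⟪S x, x⟫_𝕜 := by
  rcases (norm_nonneg S).eq_or_lt with h0 | h0
  · simp [norm_eq_zero.mp h0.symm]
  have hSS : RCLike.re ⟪S (S x), S x⟫_𝕜 ≤ ‖S‖ * ‖S x‖ ^ 2 :=
    calc RCLike.re ⟪S (S x), S x⟫_𝕜 ≤ ‖S (S x)‖ * ‖S x‖ := re_inner_le_norm _ _
      _ ≤ ‖S‖ * ‖S x‖ * ‖S x‖ := by gcongr; exact S.le_opNorm _
      _ = ‖S‖ * ‖S x‖ ^ 2 := by ring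
  -- Expanding `⟪S y, y⟫ ≥ 0` at `y = ‖S‖ x - S x` bounds `2 ‖S‖ ‖S x‖²`.
  have hpos := hS.re_inner_nonneg_left ((‖S‖ : 𝕜) • x - S x)
  have hcross : ⟪S (S x), x⟫_𝕜 = ⟪S x, S x⟫_𝕜 := hS.inner_left_eq_inner_right _ _
  simp only [map_sub, map_smul, inner_sub_left, inner_sub_right, inner_smul_left,
    inner_smul_right, hcross, RCLike.conj_ofReal, RCLike.re_ofReal_mul,
    inner_self_eq_norm_sq] at hpos
  have : 0 ≤ ‖S‖ * (‖S‖ * RCLike.re ⟪S x, x⟫_𝕜 - ‖S x‖ ^ 2) := by linarith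
  linarith [nonneg_of_mul_nonneg_right this h0]

theorem exists_pos_le_re_inner_of_isPositive {S : E →L[𝕜] E} (hS : S.IsPositive) {K : NNReal}
    (hanti : AntilipschitzWith K S) :
    ∃ δ > 0, ∀ x, δ * ‖x‖ ^ 2 ≤ RCLike.re ⟪S x, x⟫_𝕜 := by
  obtain ⟨c, hc, hle⟩ := antilipschitzWith_iff_exists_mul_le_norm.mp ⟨K, hanti⟩
  refine ⟨c ^ 2 / (‖S‖ + 1), by positivity, fun x => ?_⟩
  rw [div_mul_eq_mul_div, div_le_iff₀' (by positivity)]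
  calc c ^ 2 * ‖x‖ ^ 2 = (c * ‖x‖) ^ 2 := by ring
    _ ≤ ‖S x‖ ^ 2 := by gcongr; exact hle x
    _ ≤ ‖S‖ * RCLike.re ⟪S x, x⟫_𝕜 := norm_apply_sq_le_of_isPositive hS x
    _ ≤ (‖S‖ + 1) * RCLike.re ⟪S x, x⟫_𝕜 := by
        gcongr
        · exact hS.re_inner_nonneg_left x
        · linarith

theorem exists_hasEigenvalue_gt_of_isCompactOperator {T : E →L[𝕜] E} (hT : T.IsSymmetric)
    (hcomp : IsCompactOperator T) {c : ℝ} (hc : 0 ≤ c) {x : E}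
    (hx : c * ‖x‖ ^ 2 < RCLike.re ⟪T x, x⟫_𝕜) :
    ∃ μ : ℝ, c < μ ∧ Module.End.HasEigenvalue (T : Module.End 𝕜 E) (μ : 𝕜) := by
  set m : ℝ := ⨆ y, T.rayleighQuotient y
  have hbdd : BddAbove (Set.range T.rayleighQuotient) :=
    ⟨‖T‖, Set.forall_mem_range.mpr fun y => (le_abs_self _).trans (T.rayleighQuotient_le_norm y)⟩
  have re_inner_le (y : E) : RCLike.re ⟪T y, y⟫_𝕜 ≤ m * ‖y‖ ^ 2 := by
    rcases eq_or_ne y 0 with rfl | hy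
    · simp
    · exact (div_le_iff₀ (by positivity)).mp (le_ciSup hbdd y)
  have hcm : c < m := lt_of_mul_lt_mul_right (hx.trans_le (re_inner_le x)) (sq_nonneg _)
  refine ⟨m, hcm, ?_⟩
  by_contra hnot
  -- If `m` is not an eigenvalue, compactness makes `m - T` bounded below, hence coercive, and this
  -- pushes the supremum `m` of the Rayleigh quotient down.
  set S : E →L[𝕜] E := (m : 𝕜) • 1 - T
  have re_inner_S (y : E) : RCLike.re ⟪S y, y⟫_𝕜 = m * ‖y‖ ^ 2 - RCLike.re ⟪T y, y⟫_𝕜 := by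
    simp [S, inner_sub_left, inner_smul_left]
  have hSpos : S.IsPositive :=
    ⟨.sub (.smul (RCLike.conj_ofReal m) .one) hT,
      fun y => (sub_nonneg.mpr (re_inner_le y)).trans_eq (re_inner_S y).symm⟩
  obtain ⟨K, hanti⟩ : ∃ K, AntilipschitzWith K S := by
    obtain ⟨K, hK⟩ := hcomp.antilipschitz_of_not_hasEigenvalue
      (RCLike.ofReal_ne_zero.mpr (hc.trans_lt hcm).ne') hnot
    exact ⟨K, by simpa [S] using hK.neg⟩
  obtain ⟨δ, hδ, hcoercive⟩ := exists_pos_le_re_inner_of_isPositive hSpos hanti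
  have rayleigh_le (y : E) : T.rayleighQuotient y ≤ max 0 (m - δ) := by
    rcases eq_or_ne y 0 with rfl | hy
    · simp
    · refine le_max_of_le_right ((div_le_iff₀ (by positivity)).mpr ?_)
      linarith [hcoercive y, re_inner_S y, T.reApplyInnerSelf_apply y]
  have : m ≤ max 0 (m - δ) := ciSup_le rayleigh_le
  rcases le_max_iff.mp this with h | h <;> linarith

theorem re_inner_le_of_mem_orthogonal {T : E →L[𝕜] E} (hT : T.IsSymmetric)
    (hcomp : IsCompactOperator T) {U : Submodule 𝕜 E} (hU : ∀ x ∈ U, T x ∈ U) {c : ℝ} (hc : 0 ≤ c)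
    (heig : ∀ μ : ℝ, c < μ → ∀ x, T x = (μ : 𝕜) • x → x ∈ U) {x : E} (hx : x ∈ Uᗮ) :
    RCLike.re ⟪T x, x⟫_𝕜 ≤ c * ‖x‖ ^ 2 := by
  have hUperp : Set.MapsTo T Uᗮ Uᗮ := fun y hy u hu =>
    (hT u y).symm.trans (hy _ (hU u hu))
  by_contra! hlt
  obtain ⟨μ, hcμ, hμ⟩ := exists_hasEigenvalue_gt_of_isCompactOperator
    (T := T.restrict hUperp) (hT.restrict_invariant hUperp)
    (hcomp.restrict (f := T.toLinearMap) hUperp U.isClosed_orthogonal) hc (x := ⟨x, hx⟩) hlt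
  obtain ⟨y, hy⟩ := hμ.exists_hasEigenvector
  have hTy : T y = (μ : 𝕜) • (y : E) := congrArg Subtype.val hy.apply_eq_smul
  have hyU : (y : E) ∈ U := heig μ hcμ y hTy
  exact hy.2 (Subtype.ext (inner_self_eq_zero.mp (y.2 _ hyU)))

theorem enorm_sq_apply_sub_starProjection_le {ψ : ι → E} (hψ : Orthonormal 𝕜 ψ)
    {Ilow Ires Ihi : Set ι} [(span 𝕜 (ψ '' Ilow)).HasOrthogonalProjection]
    [(span 𝕜 (ψ '' Ires)).HasOrthogonalProjection]
    (hcover : Ilow ∪ Ires ∪ Ihi = Set.univ) (T : E →L[𝕜] E) (k : ι) :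
    ‖(T - (span 𝕜 (ψ '' Ilow)).starProjection)
        ((span 𝕜 (ψ '' Ires))ᗮ.starProjection (ψ k))‖ₑ ^ 2 ≤
      Ihi.indicator (fun k => ‖T (ψ k)‖ₑ ^ 2) k +
        Ilow.indicator (fun k => ‖ψ k - T (ψ k)‖ₑ ^ 2) k := by
  set V := span 𝕜 (ψ '' Ilow)
  set W := span 𝕜 (ψ '' Ires)
  by_cases hres : k ∈ Ires
  · have : Wᗮ.starProjection (ψ k) = 0 := by
      rw [starProjection_apply_eq_zero_iff]
      exact le_orthogonal_orthogonal W (subset_span ⟨k, hres, rfl⟩)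
    rw [this, map_zero]
    simp
  have hW : Wᗮ.starProjection (ψ k) = ψ k :=
    starProjection_eq_self_iff.mpr (mem_orthogonal_span_image_of_notMem hψ hres)
  by_cases hlow : k ∈ Ilow
  · have hV : V.starProjection (ψ k) = ψ k :=
      starProjection_eq_self_iff.mpr (subset_span ⟨k, hlow, rfl⟩)
    rw [sub_apply, hW, hV, enorm_sub_rev]
    simp [hlow]
  · have hV : V.starProjection (ψ k) = 0 :=
      (starProjection_apply_eq_zero_iff _).mpr (mem_orthogonal_span_image_of_notMem hψ hlow)
    have hhi : k ∈ Ihi := by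
      rcases hcover.ge (Set.mem_univ k) with (h | h) | h
      exacts [absurd h hlow, absurd h hres, h]
    rw [sub_apply, hW, hV]
    simp [hhi]

theorem norm_apply_sub_starProjection_le {ψ : ι → E} (hψ : Orthonormal 𝕜 ψ)
    (hdense : (span 𝕜 (Set.range ψ)).topologicalClosure = ⊤) {Ilow Ires Ihi : Set ι}
    [(span 𝕜 (ψ '' Ilow)).HasOrthogonalProjection] [(span 𝕜 (ψ '' Ires)).HasOrthogonalProjection]
    (hcover : Ilow ∪ Ires ∪ Ihi = Set.univ) {T : E →L[𝕜] E} {ε : ℝ} (hε : 0 ≤ ε)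
    (hbound : (∑' k : Ihi, ‖T (ψ k)‖ₑ ^ 2) + ∑' k : Ilow, ‖ψ k - T (ψ k)‖ₑ ^ 2
      ≤ ENNReal.ofReal (ε ^ 2)) {x : E} (hx : x ∈ (span 𝕜 (ψ '' Ires))ᗮ) :
    ‖T x - (span 𝕜 (ψ '' Ilow)).starProjection x‖ ≤ ε * ‖x‖ := by
  set V := span 𝕜 (ψ '' Ilow)
  set W := span 𝕜 (ψ '' Ires)
  set S : E →L[𝕜] E := (T - V.starProjection) ∘L Wᗮ.starProjection
  have hSsum (s : Finset ι) : ∑ k ∈ s, ‖S (ψ k)‖ ^ 2 ≤ ε ^ 2 := by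
    rw [← ENNReal.ofReal_le_ofReal_iff (sq_nonneg ε),
      ENNReal.ofReal_sum_of_nonneg fun _ _ => sq_nonneg _]
    simp only [ENNReal.ofReal_pow (norm_nonneg _), ofReal_norm]
    calc ∑ k ∈ s, ‖S (ψ k)‖ₑ ^ 2 ≤ ∑' k, ‖S (ψ k)‖ₑ ^ 2 := ENNReal.sum_le_tsum s
      _ ≤ ∑' k, (Ihi.indicator (fun k => ‖T (ψ k)‖ₑ ^ 2) k +
            Ilow.indicator (fun k => ‖ψ k - T (ψ k)‖ₑ ^ 2) k) :=
          ENNReal.tsum_le_tsum (enorm_sq_apply_sub_starProjection_le hψ hcover T)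
      _ = (∑' k : Ihi, ‖T (ψ k)‖ₑ ^ 2) + ∑' k : Ilow, ‖ψ k - T (ψ k)‖ₑ ^ 2 := by
          rw [ENNReal.tsum_add, ← tsum_subtype, ← tsum_subtype]
      _ ≤ ENNReal.ofReal (ε ^ 2) := hbound
  have hSx : S x = T x - V.starProjection x := by
    simp [S, starProjection_eq_self_iff.mpr hx]
  rw [← hSx]
  exact S.le_of_opNorm_le (opNorm_le_of_sum_norm_sq_le hψ hdense hε hSsum) x

/-- The vectors `f k` with `0 < lam k` form a complete orthonormal system of eigenvectors of `T`
for its positive eigenvalues. Indices with `lam k ≤ 0` are padding on which nothing is required;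
`mem_span` says that each positive eigenvalue occurs in `lam` with its full multiplicity. -/
structure IsPosEigensystem (T : E →L[𝕜] E) (lam : κ → ℝ) (f : κ → E) : Prop where
  orthonormal : Orthonormal 𝕜 fun k : {k | 0 < lam k} => f k
  apply_eq : ∀ k, 0 < lam k → T (f k) = (lam k : 𝕜) • f k
  mem_span : ∀ μ : ℝ, 0 < μ → ∀ x, T x = (μ : 𝕜) • x → x ∈ span 𝕜 (f '' {k | lam k = μ})

namespace IsPosEigensystem

variable {T : E →L[𝕜] E} {lam : κ → ℝ} {f : κ → E}

theorem orthonormal_restrict (h : IsPosEigensystem T lam f) {A : Set κ}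
    (hA : ∀ k ∈ A, 0 < lam k) : Orthonormal 𝕜 fun k : A => f k :=
  h.orthonormal.comp (Set.inclusion hA) (Set.inclusion_injective hA)

theorem mul_norm_lt_norm_apply (h : IsPosEigensystem T lam f) {c : ℝ} (hc : 0 ≤ c) {x : E}
    (hx : x ∈ span 𝕜 (f '' {k | c < lam k})) (hx0 : x ≠ 0) : c * ‖x‖ < ‖T x‖ := by
  have hpos : ∀ k ∈ {k | c < lam k}, 0 < lam k := fun k hk => hc.trans_lt hk
  have hlt : ∀ k ∈ {k | c < lam k}, ‖(c : 𝕜)‖ < ‖(lam k : 𝕜)‖ := fun k hk => by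
    simpa [abs_of_nonneg hc, abs_of_pos (hpos k hk)] using hk
  rw [Set.image_eq_range] at hx
  calc c * ‖x‖ = ‖((c : 𝕜) • LinearMap.id : E →ₗ[𝕜] E) x‖ := by
        rw [LinearMap.smul_apply, LinearMap.id_apply, norm_smul, RCLike.norm_ofReal,
          abs_of_nonneg hc]
    _ < ‖T x‖ := norm_apply_lt_of_mem_span_range_orthonormal (B := T)
      (h.orthonormal_restrict hpos) (fun _ => rfl) (fun k => h.apply_eq k (hpos k k.2))
      (fun k => hlt k k.2) hx hx0

theorem norm_apply_sub_midpoint_lt (h : IsPosEigensystem T lam f) {a b : ℝ} (ha : 0 ≤ a)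
    {x : E} (hx : x ∈ span 𝕜 (f '' {k | lam k ∈ Set.Ioo a b})) (hx0 : x ≠ 0) :
    ‖T x - (((a + b) / 2 : ℝ) : 𝕜) • x‖ < (b - a) / 2 * ‖x‖ := by
  have hab : a < b := by
    by_contra hab
    simp [Set.Ioo_eq_empty hab, hx0] at hx
  have hpos : ∀ k ∈ {k | lam k ∈ Set.Ioo a b}, 0 < lam k := fun k hk => ha.trans_lt hk.1
  have hlt : ∀ k ∈ {k | lam k ∈ Set.Ioo a b},
      ‖((lam k - (a + b) / 2 : ℝ) : 𝕜)‖ < ‖(((b - a) / 2 : ℝ) : 𝕜)‖ := fun k ⟨hak, hkb⟩ => by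
    rw [RCLike.norm_ofReal, RCLike.norm_ofReal]
    exact (abs_lt.mpr ⟨by linarith, by linarith⟩).trans_le (le_abs_self _)
  have hdiff : ∀ k : {k | lam k ∈ Set.Ioo a b},
      (T.toLinearMap - (((a + b) / 2 : ℝ) : 𝕜) • LinearMap.id : E →ₗ[𝕜] E) (f k) =
        ((lam k - (a + b) / 2 : ℝ) : 𝕜) • f k := fun k => by
    rw [LinearMap.sub_apply, LinearMap.smul_apply, LinearMap.id_apply,
      ContinuousLinearMap.coe_coe, h.apply_eq k (hpos k k.2), RCLike.ofReal_sub, sub_smul]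
  rw [Set.image_eq_range] at hx
  calc ‖T x - (((a + b) / 2 : ℝ) : 𝕜) • x‖
      < ‖((((b - a) / 2 : ℝ) : 𝕜) • LinearMap.id : E →ₗ[𝕜] E) x‖ :=
        norm_apply_lt_of_mem_span_range_orthonormal (h.orthonormal_restrict hpos) hdiff
          (fun _ => rfl) (fun k => hlt k k.2) hx hx0
    _ = (b - a) / 2 * ‖x‖ := by
        rw [LinearMap.smul_apply, LinearMap.id_apply, norm_smul, RCLike.norm_ofReal,
          abs_of_nonneg (by linarith)]

theorem re_inner_le (h : IsPosEigensystem T lam f) (hT : T.IsSymmetric)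
    (hcomp : IsCompactOperator T) {c : ℝ} (hc : 0 ≤ c) {x : E}
    (hx : x ∈ (span 𝕜 (f '' {k | c < lam k}))ᗮ) : RCLike.re ⟪T x, x⟫_𝕜 ≤ c * ‖x‖ ^ 2 := by
  refine re_inner_le_of_mem_orthogonal hT hcomp (fun y hy => ?_) hc (fun μ hμ y hy => ?_) hx
  · refine (span_le.mpr ?_ : _ ≤ (span 𝕜 (f '' {k | c < lam k})).comap T.toLinearMap) hy
    rintro _ ⟨k, hk, rfl⟩
    change T (f k) ∈ span 𝕜 (f '' {k | c < lam k})
    rw [h.apply_eq k (hc.trans_lt hk)]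
    exact smul_mem _ _ (subset_span ⟨k, hk, rfl⟩)
  · exact span_mono (Set.image_mono fun k hk => hμ.trans_eq hk.symm)
      (h.mem_span μ (hc.trans_lt hμ) y hy)

theorem encard_setOf_lt_le (h : IsPosEigensystem T lam f) {c : ℝ} (hc : 0 ≤ c)
    {ψ : ι → E} {B : Set ι} (hB : ∀ x ∈ (span 𝕜 (ψ '' B))ᗮ, ‖T x‖ ≤ c * ‖x‖) :
    {k | c < lam k}.encard ≤ B.encard := by
  refine encard_le_encard_of_mem_orthogonal_imp_eq_zero
    (h.orthonormal_restrict fun k hk => hc.trans_lt hk).linearIndependent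
    (ψ := ψ) fun x hx hxB => ?_
  by_contra hx0
  exact (h.mul_norm_lt_norm_apply hc hx hx0).not_ge (hB x hxB)

theorem encard_le_encard_setOf_lt (h : IsPosEigensystem T lam f) (hT : T.IsSymmetric)
    (hcomp : IsCompactOperator T) {c δ : ℝ} (hc : 0 ≤ c) (hcδ : c + δ < 1)
    {ψ : ι → E} {B : Set ι} (hψ : LinearIndepOn 𝕜 ψ B)
    (hB : ∀ x ∈ span 𝕜 (ψ '' B), ‖T x - x‖ ≤ δ * ‖x‖) :
    B.encard ≤ {k | c < lam k}.encard := by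
  refine encard_le_encard_of_mem_orthogonal_imp_eq_zero (ψ := f) hψ fun x hxB hx => ?_
  have hTx : RCLike.re ⟪T x, x⟫_𝕜 ≤ c * ‖x‖ ^ 2 := h.re_inner_le hT hcomp hc hx
  have hxTx : RCLike.re ⟪x - T x, x⟫_𝕜 ≤ δ * ‖x‖ ^ 2 :=
    calc RCLike.re ⟪x - T x, x⟫_𝕜 ≤ ‖x - T x‖ * ‖x‖ := re_inner_le_norm _ _
      _ ≤ δ * ‖x‖ * ‖x‖ := by
        rw [norm_sub_rev]; gcongr; exact hB x hxB
      _ = δ * ‖x‖ ^ 2 := by ring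
  rw [inner_sub_left, map_sub, inner_self_eq_norm_sq] at hxTx
  have : (1 - (c + δ)) * ‖x‖ ^ 2 ≤ 0 := by linarith
  simpa using nonpos_of_mul_nonpos_right this (sub_pos.mpr hcδ)

theorem encard_setOf_mem_Ioo_le (h : IsPosEigensystem T lam f) {ε : ℝ} (hε : 0 ≤ ε)
    {V : Submodule 𝕜 E} [V.HasOrthogonalProjection] {ψ : ι → E} {B : Set ι}
    (hB : ∀ x ∈ (span 𝕜 (ψ '' B))ᗮ, ‖T x - V.starProjection x‖ ≤ ε * ‖x‖) :
    {k | lam k ∈ Set.Ioo ε (1 - ε)}.encard ≤ B.encard := by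
  refine encard_le_encard_of_mem_orthogonal_imp_eq_zero
    (h.orthonormal_restrict fun k hk => hε.trans_lt hk.1).linearIndependent
    (ψ := ψ) fun x hx hxB => ?_
  by_contra hx0
  have hmid := h.norm_apply_sub_midpoint_lt hε hx hx0
  have hproj : ‖V.starProjection x - ((1 / 2 : ℝ) : 𝕜) • x‖ = 1 / 2 * ‖x‖ :=
    norm_starProjection_sub_half_smul V x
  rw [add_sub_cancel] at hmid
  have htri := norm_sub_le_norm_sub_add_norm_sub (V.starProjection x) (T x) (((1 / 2 : ℝ) : 𝕜) • x)
  rw [norm_sub_rev (V.starProjection x) (T x)] at htri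
  linarith [hB x hxB]

end IsPosEigensystem

theorem stmt5_general {T : E →L[𝕜] E} (hT : T.IsSymmetric) (hcomp : IsCompactOperator T)
    {lam : κ → ℝ} {f : κ → E} (h : IsPosEigensystem T lam f)
    {ψ : ι → E} (hψ : Orthonormal 𝕜 ψ)
    (hdense : (span 𝕜 (Set.range ψ)).topologicalClosure = ⊤)
    {Ilow Ires Ihi : Set ι} (hlowfin : Ilow.Finite) (hresfin : Ires.Finite)
    (hdisj : Disjoint Ilow Ires) (hcover : Ilow ∪ Ires ∪ Ihi = Set.univ)
    {ε : ℝ} (hε₀ : 0 ≤ ε) (hε : ε < 1 / 2)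
    (hbound : (∑' k : Ihi, ‖T (ψ k)‖ₑ ^ 2) + ∑' k : Ilow, ‖ψ k - T (ψ k)‖ₑ ^ 2
      ≤ ENNReal.ofReal (ε ^ 2)) :
    {k | ε < lam k}.Finite ∧ {k | lam k ∈ Set.Ioo ε (1 - ε)}.ncard ≤ Ires.ncard ∧
      Ilow.ncard ≤ {k | ε < lam k}.ncard ∧
      {k | ε < lam k}.ncard ≤ Ilow.ncard + Ires.ncard := by
  have : FiniteDimensional 𝕜 (span 𝕜 (ψ '' Ilow)) := .span_of_finite 𝕜 (hlowfin.image ψ)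
  have : FiniteDimensional 𝕜 (span 𝕜 (ψ '' Ires)) := .span_of_finite 𝕜 (hresfin.image ψ)
  have happrox (x : E) (hx : x ∈ (span 𝕜 (ψ '' Ires))ᗮ) :
      ‖T x - (span 𝕜 (ψ '' Ilow)).starProjection x‖ ≤ ε * ‖x‖ :=
    norm_apply_sub_starProjection_le hψ hdense hcover hε₀ hbound hx
  have hupper : {k | ε < lam k}.encard ≤ (Ilow ∪ Ires).encard :=
    h.encard_setOf_lt_le hε₀ (ψ := ψ) fun x hx => by
      rw [Set.image_union, span_union, ← inf_orthogonal] at hx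
      simpa [(starProjection_apply_eq_zero_iff _).mpr hx.1] using happrox x hx.2
  have hlower : Ilow.encard ≤ {k | ε < lam k}.encard :=
    h.encard_le_encard_setOf_lt hT hcomp hε₀ (by linarith)
      (hψ.linearIndependent.linearIndepOn Ilow) fun x hx => by
      simpa [starProjection_eq_self_iff.mpr hx] using
        happrox x (span_image_isOrtho_of_disjoint hψ hdisj hx)
  have hmid : {k | lam k ∈ Set.Ioo ε (1 - ε)}.encard ≤ Ires.encard :=
    h.encard_setOf_mem_Ioo_le hε₀ happrox
  have hfin : {k | ε < lam k}.Finite := (hlowfin.union hresfin).finite_of_encard_le hupper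
  exact ⟨hfin, ENat.toNat_le_toNat hmid hresfin.encard_lt_top.ne,
    ENat.toNat_le_toNat hlower hfin.encard_lt_top.ne,
    (ENat.toNat_le_toNat hupper (hlowfin.union hresfin).encard_lt_top.ne).trans
      (Set.ncard_union_le _ _)⟩

end InnerProductSpace

theorem exists_isPosEigensystem_of_isEigSeqH {H : Type*} [NormedAddCommGroup H]
    [InnerProductSpace ℝ H] {T : H →L[ℝ] H} {lam : ℕ → ℝ} (h : IsEigSeqH T lam) :
    ∃ f, IsPosEigensystem T lam f := by
  obtain ⟨-, -, f, hnorm, horth, heig, hspan⟩ := h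
  refine ⟨f, ⟨fun k => hnorm k k.2.ne', fun k l hkl => horth k l (Subtype.coe_ne_coe.mpr hkl)⟩,
    fun k _ => heig k, fun μ hμ x hx => ?_⟩
  have himage : f '' {k | lam k = μ} = {y | ∃ k, lam k = μ ∧ y = f k} := by
    ext
    simp [eq_comm]
  exact himage ▸ hspan μ hμ.ne' x hx

/-- **Eigenvalue counting via an approximate eigenbasis.**
Let `T` be a positive semidefinite compact operator on a real Hilbert space `H` with
eigenvalue sequence `lam`, and let `{ψ_k}_{k ∈ ι}` be an orthonormal basis of `H`
partitioned as `ι = I_low ∪ I_res ∪ I_hi` with `I_low`, `I_res` finite.  If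
`Σ_{k ∈ I_hi} ‖Tψ_k‖² + Σ_{k ∈ I_low} ‖(I-T)ψ_k‖² ≤ ε²` for some `ε ∈ (0,1/2)`, then
`N_ε(T) ≤ #I_res` and `|M_ε(T) − #I_low| ≤ #I_res`, where
`M_ε(T) = #{j : lam_j > ε}` and `N_ε(T) = #{j : lam_j ∈ (ε,1-ε)}`. -/
theorem stmt5 {H : Type*} [NormedAddCommGroup H] [InnerProductSpace ℝ H] [CompleteSpace H]
    (T : H →L[ℝ] H) (hcomp : IsCompactOperator (⇑T))
    (hsa : ∀ x y : H, ⟪T x, y⟫ = ⟪x, T y⟫) (hpos : ∀ x : H, 0 ≤ ⟪T x, x⟫)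
    (lam : ℕ → ℝ) (hlam : IsEigSeqH T lam)
    {ι : Type*} (ψ : ι → H) (hON : Orthonormal ℝ ψ)
    (hdense : (Submodule.span ℝ (Set.range ψ)).topologicalClosure = ⊤)
    (Ilow Ires Ihi : Set ι) (hlowfin : Ilow.Finite) (hresfin : Ires.Finite)
    (hd1 : Disjoint Ilow Ires) (hd2 : Disjoint Ilow Ihi) (hd3 : Disjoint Ires Ihi)
    (hcover : Ilow ∪ Ires ∪ Ihi = Set.univ)
    (ε : ℝ) (hε : ε ∈ Set.Ioo (0 : ℝ) (1 / 2))
    (hbound : (∑' k : Ihi, ((‖T (ψ k)‖₊ : ℝ≥0∞) ^ 2))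
        + (∑' k : Ilow, ((‖ψ k - T (ψ k)‖₊ : ℝ≥0∞) ^ 2)) ≤ ENNReal.ofReal (ε ^ 2)) :
    {j : ℕ | ε < lam j}.Finite ∧
    {j : ℕ | lam j ∈ Set.Ioo ε (1 - ε)}.ncard ≤ Ires.ncard ∧
    |({j : ℕ | ε < lam j}.ncard : ℝ) - (Ilow.ncard : ℝ)| ≤ (Ires.ncard : ℝ) := by
  obtain ⟨f, hf⟩ := exists_isPosEigensystem_of_isEigSeqH hlam
  obtain ⟨hfin, hmid, hlower, hupper⟩ :=
    stmt5_general hsa hcomp hf hON hdense hlowfin hresfin hd1 hcover hε.1.le hε.2 hbound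
  refine ⟨hfin, hmid, ?_⟩
  rw [abs_of_nonneg (sub_nonneg.mpr (mod_cast hlower)), sub_le_iff_le_add']
  exact_mod_cast hupper
end

section
/- Let K be a compact convex subset of ℝ^d and r > 0. Then μ_d( K \ (K ⊖ B(r)) ) ≤ μ_d( (K ⊕ B(r)) \ K ), where μ_d is d-dimensional Lebesgue measure. -/
open MeasureTheory
open scoped Pointwise

/-!
Reflect each interior point `x` of `K` that lies outside the Minkowski difference `K ⊖ B(r)` through
a nearest point `p` of the frontier of `K`. As `x` is interior and `p` is not, the reflected point
leaves `K`, and it stays within `r` of `p`. Convexity makes `p - x` an outer normal of `K` at `p`,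
and outer normals are monotone: `⟪p - q, (p - x) - (q - y)⟫ ≥ 0` for a second such pair `y`, `q`.
Expanding `‖(p - q) ± ((p - x) - (q - y))‖²` shows that the reflection does not decrease distances,
hence does not decrease volume. The frontier of a convex set is null, so passing to interiors and
closures costs nothing.
-/

open Metric Set
open scoped NNReal RealInnerProductSpace

/-- The Minkowski difference `K ⊖ L`, the set of translation vectors carrying `L` into `K`. It is
used with `L` the closed ball `B(r)`, and is unrelated to the pointwise difference `K - L`. -/
def minkowskiDiff {E : Type*} [Add E] (K L : Set E) : Set E :=
  {c | ∀ y ∈ L, c + y ∈ K}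

section Haar

variable {E : Type*} [NormedAddCommGroup E] [NormedSpace ℝ E] [FiniteDimensional ℝ E]
  [MeasurableSpace E] [BorelSpace E] (μ : Measure E) [μ.IsAddHaarMeasure]

lemma addHaar_le_mul_addHaar_image_of_antilipschitzWith {f : E → E} {s : Set E} {C : ℝ≥0}
    (hf : AntilipschitzWith C (s.domRestrict f)) :
    μ s ≤ C ^ Module.finrank ℝ E * μ (f '' s) := by
  set n := Module.finrank ℝ E
  have hausdorff_le : μH[n] s ≤ C ^ n * μH[n] (f '' s) := by
    have h := hf.le_hausdorffMeasure_image n.cast_nonneg univ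
    rwa [image_univ, range_domRestrict, ENNReal.rpow_natCast,
      ← isometry_subtype_coe.hausdorffMeasure_image (.inl n.cast_nonneg), image_univ,
      Subtype.range_coe] at h
  rw [Measure.isAddLeftInvariant_eq_smul μ μH[n], Measure.smul_apply, Measure.smul_apply,
    mul_smul_comm]
  gcongr

end Haar

section InnerProductSpace

variable {E : Type*} [NormedAddCommGroup E] [InnerProductSpace ℝ E]

lemma norm_sub_le_norm_add_of_inner_nonneg {u v : E} (h : 0 ≤ ⟪u, v⟫) : ‖u - v‖ ≤ ‖u + v‖ := by
  rw [← sq_le_sq₀ (norm_nonneg _) (norm_nonneg _), norm_sub_sq_real, norm_add_sq_real]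
  linarith

lemma exists_pos_norm_sub_smul_lt {u v : E} (h : 0 < ⟪u, v⟫) :
    ∃ t : ℝ, 0 < t ∧ ‖u - t • v‖ < ‖u‖ := by
  have hv : 0 < ‖v‖ ^ 2 := by
    have : v ≠ 0 := by
      rintro rfl
      simp at h
    positivity
  -- `t • v` is the orthogonal projection of `u` to the line spanned by `v`.
  refine ⟨⟪u, v⟫ / ‖v‖ ^ 2, by positivity, lt_of_pow_lt_pow_left₀ 2 (norm_nonneg _) ?_⟩
  calc ‖u - (⟪u, v⟫ / ‖v‖ ^ 2) • v‖ ^ 2 = ‖u‖ ^ 2 - ⟪u, v⟫ ^ 2 / ‖v‖ ^ 2 := by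
        rw [norm_sub_sq_real, inner_smul_right, norm_smul, mul_pow, Real.norm_eq_abs, sq_abs]
        field_simp
        ring
    _ < ‖u‖ ^ 2 := sub_lt_self _ (by positivity)

lemma inner_sub_sub_nonpos_of_ball_subset {K : Set E} (hK : Convex ℝ K) {x p w : E}
    (hball : ball x (dist x p) ⊆ K) (hp : p ∉ interior K) (hw : w ∈ closure K) :
    ⟪p - x, w - p⟫ ≤ 0 := by
  by_contra! h
  obtain ⟨t, ht, hlt⟩ := exists_pos_norm_sub_smul_lt h
  have hq : p - t • (w - p) ∈ interior K := by
    refine interior_maximal hball isOpen_ball ?_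
    rwa [mem_ball, dist_comm x p, dist_eq_norm, dist_eq_norm, sub_right_comm]
  have hseg : p ∈ openSegment ℝ (p - t • (w - p)) w := by
    refine mem_openSegment_iff_div.2 ⟨1, t, one_pos, ht, ?_⟩
    match_scalars <;> field_simp <;> ring
  exact hp (hK.openSegment_interior_closure_subset_interior hq hw hseg)

lemma antilipschitzWith_domRestrict_pointReflection {P : E → E} {s : Set E}
    (hP : ∀ x ∈ s, ∀ y ∈ s, ⟪P x - x, P y - P x⟫ ≤ 0) :
    AntilipschitzWith 1 (s.domRestrict fun x ↦ Equiv.pointReflection (P x) x) := by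
  refine AntilipschitzWith.of_le_mul_dist fun ⟨x, hx⟩ ⟨y, hy⟩ ↦ ?_
  have hmono : 0 ≤ ⟪P x - P y, (P x - x) - (P y - y)⟫ := by
    have hsum : ⟪P x - P y, (P x - x) - (P y - y)⟫
        = -⟪P x - x, P y - P x⟫ - ⟪P y - y, P x - P y⟫ := by
      rw [inner_sub_right, real_inner_comm, real_inner_comm (P y - y), ← neg_sub (P y),
        inner_neg_right]
    linarith [hP x hx y hy, hP y hy x hx]
  calc dist x y = ‖(P x - P y) - ((P x - x) - (P y - y))‖ := by
        rw [dist_eq_norm]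
        congr 1
        abel
    _ ≤ ‖(P x - P y) + ((P x - x) - (P y - y))‖ := norm_sub_le_norm_add_of_inner_nonneg hmono
    _ = 1 * dist (Equiv.pointReflection (P x) x) (Equiv.pointReflection (P y) y) := by
        rw [one_mul, dist_eq_norm, Equiv.pointReflection_apply, Equiv.pointReflection_apply]
        simp only [vsub_eq_sub, vadd_eq_add]
        congr 1
        abel

end InnerProductSpace

section Reflection

variable {E : Type*} [NormedAddCommGroup E] {K : Set E} {x p : E} {r : ℝ}

lemma pointReflection_mem_closure_add_closedBall (hp : p ∈ closure K) (hr : dist x p ≤ r) :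
    Equiv.pointReflection p x ∈ closure (K + closedBall 0 r) := by
  have hpx : p - x ∈ closedBall (0 : E) r := by
    rwa [mem_closedBall_zero_iff, ← dist_eq_norm, dist_comm]
  rw [Equiv.pointReflection_apply, vsub_eq_sub, vadd_eq_add, add_comm (p - x)]
  exact map_mem_closure₂ continuous_add hp (subset_closure hpx)
    fun _ ha _ hb ↦ add_mem_add ha hb

variable [NormedSpace ℝ E]

lemma pointReflection_notMem_closure (hK : Convex ℝ K) (hx : x ∈ interior K)
    (hp : p ∉ interior K) : Equiv.pointReflection p x ∉ closure K := by
  intro h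
  have hmid : p ∈ openSegment ℝ x (Equiv.pointReflection p x) := by
    simpa using midpoint_mem_openSegment (𝕜 := ℝ) x (Equiv.pointReflection p x)
  exact hp (hK.openSegment_interior_closure_subset_interior hx h hmid)

lemma exists_mem_frontier_ball_subset [FiniteDimensional ℝ E] (hx : x ∈ K)
    (hxr : x ∉ minkowskiDiff K (closedBall 0 r)) :
    ∃ p ∈ frontier K, ball x (dist x p) ⊆ K ∧ dist x p ≤ r := by
  obtain ⟨y, hy, hxy⟩ : ∃ y ∈ closedBall (0 : E) r, x + y ∉ K := by
    simpa only [minkowskiDiff, mem_ofPred_eq, not_forall, exists_prop] using hxr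
  obtain ⟨p, hp, hdist⟩ := exists_mem_frontier_infDist_compl_eq_dist hx
    ((ne_univ_iff_exists_notMem K).2 ⟨x + y, hxy⟩)
  refine ⟨p, hp, hdist ▸ ball_infDist_compl_subset, ?_⟩
  calc dist x p = infDist x Kᶜ := hdist.symm
    _ ≤ dist x (x + y) := infDist_le_dist_of_mem hxy
    _ ≤ r := by simpa only [dist_self_add_right, mem_closedBall_zero_iff] using hy

end Reflection

section Collars

variable {E : Type*} [NormedAddCommGroup E] [InnerProductSpace ℝ E] [FiniteDimensional ℝ E]
  [MeasurableSpace E] [BorelSpace E] (μ : Measure E) [μ.IsAddHaarMeasure] {K : Set E}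

lemma addHaar_interior_diff_minkowskiDiff_le (hK : Convex ℝ K) (r : ℝ) :
    μ (interior K \ minkowskiDiff K (closedBall 0 r))
      ≤ μ (closure (K + closedBall 0 r) \ closure K) := by
  set s := interior K \ minkowskiDiff K (closedBall 0 r)
  have hnearest : ∀ x ∈ s, ∃ p ∈ frontier K, ball x (dist x p) ⊆ K ∧ dist x p ≤ r :=
    fun x hx ↦ exists_mem_frontier_ball_subset (interior_subset hx.1) hx.2
  choose! P hfrontier hball hdist using hnearest
  have hanti : AntilipschitzWith 1 (s.domRestrict fun x ↦ Equiv.pointReflection (P x) x) :=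
    antilipschitzWith_domRestrict_pointReflection fun x hx y hy ↦
      inner_sub_sub_nonpos_of_ball_subset hK (hball x hx) (hfrontier x hx).2 (hfrontier y hy).1
  calc μ s ≤ μ ((fun x ↦ Equiv.pointReflection (P x) x) '' s) := by
        simpa using addHaar_le_mul_addHaar_image_of_antilipschitzWith μ hanti
    _ ≤ μ (closure (K + closedBall 0 r) \ closure K) := by
        refine measure_mono (image_subset_iff.2 fun x hx ↦ ⟨?_, ?_⟩)
        · exact pointReflection_mem_closure_add_closedBall (hfrontier x hx).1 (hdist x hx)
        · exact pointReflection_notMem_closure hK hx.1 (hfrontier x hx).2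

theorem stmt6_general (hK : Convex ℝ K) (r : ℝ) :
    μ (K \ minkowskiDiff K (closedBall 0 r)) ≤ μ ((K + closedBall 0 r) \ K) := by
  have hinterior : interior K =ᵐ[μ] K :=
    interior_ae_eq_of_null_frontier (hK.addHaar_frontier μ)
  have hclosure {L : Set E} (hL : Convex ℝ L) : closure L =ᵐ[μ] L :=
    closure_ae_eq_of_null_frontier (hL.addHaar_frontier μ)
  calc μ (K \ minkowskiDiff K (closedBall 0 r))
      = μ (interior K \ minkowskiDiff K (closedBall 0 r)) :=
        measure_congr (hinterior.symm.diff .rfl)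
    _ ≤ μ (closure (K + closedBall 0 r) \ closure K) :=
        addHaar_interior_diff_minkowskiDiff_le μ hK r
    _ = μ ((K + closedBall 0 r) \ K) :=
        measure_congr ((hclosure (hK.add (convex_closedBall 0 r))).diff (hclosure hK))

end Collars

/-- **Inner vs outer neighborhood of a convex body.**
For a compact convex `K ⊆ ℝ^d` and `r > 0`, the volume of the inner collar
`K \ (K ⊖ B(r))` is at most the volume of the outer collar `(K ⊕ B(r)) \ K`,
where `K ⊕ B(r)` is the Minkowski sum and `K ⊖ B(r) = {c : c + B(r) ⊆ K}` is the
Minkowski difference with the closed ball of radius `r`. -/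
theorem stmt6 (d : ℕ) (K : Set (EuclideanSpace ℝ (Fin d))) (hK : IsCompact K)
    (hconv : Convex ℝ K) (r : ℝ) (hr : 0 < r) :
    volume (K \ {c : EuclideanSpace ℝ (Fin d) |
        ∀ y ∈ Metric.closedBall (0 : EuclideanSpace ℝ (Fin d)) r, c + y ∈ K})
      ≤ volume ((K + Metric.closedBall (0 : EuclideanSpace ℝ (Fin d)) r) \ K) :=
  stmt6_general volume hconv r
end

section
/- Let A > 0, a > 0, δ_1, …, δ_d ∈ (0,1], and k = (k_1,…,k_d) ∈ ℕ^d. Suppose g_1, …, g_d : ℝ → ℂ satisfy |g_j(ξ)|² ≤ 2A² δ_j Σ_{σ∈{±1}} Ψ_{2a}( δ_j ξ − σ π (k_j + 1/2) ) for all ξ ∈ ℝ and each j. Then for all ξ = (ξ_1,…,ξ_d) ∈ ℝ^d: |∏_{j=1}^d g_j(ξ_j)|² ≤ 2^d A^{2d} (∏_{j=1}^d δ_j) Σ_{σ ∈ {±1}^d} Ψ_{2a}( π · | τ(ξ) − σ ∘ (k + (1/2)𝟙) | ), where τ(ξ) = π^{−1}(δ_1 ξ_1, …, δ_d ξ_d),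 σ ∘ x = (σ_1 x_1, …, σ_d x_d), 𝟙 = (1,…,1), and |·| is the Euclidean norm on ℝ^d. -/
open MeasureTheory

/-- The envelope function `Ψ_a(t) = exp(-a * |t|^(2/3))`. -/
noncomputable def Psi (a t : ℝ) : ℝ := Real.exp (-a * |t| ^ ((2 : ℝ) / 3))

/-!
Expanding the product of the one-dimensional bounds over all sign vectors `σ` gives a sum of
products `∏ j, Ψ(π y_j)`, and the exponent of each is proportional to `∑ j, |y_j| ^ (2/3)`.
As `2/3 ≤ 2`, the Euclidean norm satisfies `|y| ^ (2/3) ≤ ∑ j, |y_j| ^ (2/3)`, so each product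
is at most `Ψ(π |y|)`.
-/

theorem rpow_sum_le_sum_rpow {ι : Type*} (s : Finset ι) {f : ι → ℝ} (hf : ∀ i ∈ s, 0 ≤ f i)
    {p : ℝ} (hp : 0 < p) (hp1 : p ≤ 1) :
    (∑ i ∈ s, f i) ^ p ≤ ∑ i ∈ s, f i ^ p :=
  Finset.le_sum_of_subadditive_on_pred (· ^ p) (0 ≤ ·) (Real.zero_rpow hp.ne').le
    (fun _ _ hx hy => Real.rpow_add_le_add_rpow hx hy hp.le hp1)
    (fun _ _ => add_nonneg) f hf

theorem sqrt_sum_sq_rpow_le_sum_abs_rpow {ι : Type*} (s : Finset ι) (y : ι → ℝ)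
    {p : ℝ} (hp : 0 < p) (hp2 : p ≤ 2) :
    √(∑ i ∈ s, y i ^ 2) ^ p ≤ ∑ i ∈ s, |y i| ^ p := by
  have sqrt_rpow (t : ℝ) (ht : 0 ≤ t) : √t ^ p = t ^ (p / 2) := by
    rw [Real.sqrt_eq_rpow, ← Real.rpow_mul ht, one_div_mul_eq_div]
  calc √(∑ i ∈ s, y i ^ 2) ^ p
      = (∑ i ∈ s, y i ^ 2) ^ (p / 2) := sqrt_rpow _ (Finset.sum_nonneg fun i _ => sq_nonneg (y i))
    _ ≤ ∑ i ∈ s, (y i ^ 2) ^ (p / 2) :=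
      rpow_sum_le_sum_rpow s (fun i _ => sq_nonneg (y i)) (by linarith) (by linarith)
    _ = ∑ i ∈ s, |y i| ^ p :=
      Finset.sum_congr rfl fun i _ => by rw [← sqrt_rpow _ (sq_nonneg _), Real.sqrt_sq_eq_abs]

theorem Psi_pos (a t : ℝ) : 0 < Psi a t :=
  Real.exp_pos _

theorem prod_Psi_mul_le_Psi_mul_sqrt {ι : Type*} (s : Finset ι) {a : ℝ} (ha : 0 ≤ a) (r : ℝ)
    (y : ι → ℝ) :
    ∏ i ∈ s, Psi a (r * y i) ≤ Psi a (r * √(∑ i ∈ s, y i ^ 2)) := by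
  have exponent_le :
      |r * √(∑ i ∈ s, y i ^ 2)| ^ ((2 : ℝ) / 3) ≤ ∑ i ∈ s, |r * y i| ^ ((2 : ℝ) / 3) := by
    simp only [abs_mul, Real.mul_rpow, abs_nonneg, abs_of_nonneg, Real.sqrt_nonneg,
      ← Finset.mul_sum]
    gcongr
    exact sqrt_sum_sq_rpow_le_sum_abs_rpow s y (by norm_num) (by norm_num)
  unfold Psi
  rw [← Real.exp_sum, ← Finset.mul_sum, neg_mul, neg_mul]
  gcongr

theorem prod_sum_Psi_mul_le {ι β : Type*} [Fintype ι] [DecidableEq ι] [Fintype β] {a : ℝ}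
    (ha : 0 ≤ a) (r : ℝ) (y : ι → β → ℝ) :
    ∏ i, ∑ b, Psi a (r * y i b) ≤ ∑ σ : ι → β, Psi a (r * √(∑ i, y i (σ i) ^ 2)) := by
  rw [Fintype.prod_sum]
  exact Finset.sum_le_sum fun σ _ => prod_Psi_mul_le_Psi_mul_sqrt _ ha r fun i => y i (σ i)

theorem Psi_sub_add_Psi_add_eq_sum_bool (a t κ : ℝ) {r : ℝ} (hr : r ≠ 0) :
    Psi a (t - r * κ) + Psi a (t + r * κ) =
      ∑ b : Bool, Psi a (r * (t / r - (if b then 1 else -1) * κ)) := by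
  simp [mul_sub, mul_div_cancel₀ t hr]

theorem stmt10_general {ι R : Type*} [Fintype ι] [DecidableEq ι] [NormedCommRing R]
    [NormOneClass R] {a : ℝ} (ha : 0 ≤ a) (C δ κ : ι → ℝ) (g : ι → ℝ → R)
    (hg : ∀ j (ξ : ℝ), ‖g j ξ‖ ^ 2 ≤ C j *
      (Psi a (δ j * ξ - Real.pi * κ j) + Psi a (δ j * ξ + Real.pi * κ j)))
    (ξ : ι → ℝ) :
    ‖∏ j, g j (ξ j)‖ ^ 2 ≤ (∏ j, C j) *
      ∑ σ : ι → Bool, Psi a (Real.pi * √(∑ j,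
        (δ j * ξ j / Real.pi - (if σ j then 1 else -1) * κ j) ^ 2)) := by
  have hC (j : ι) : 0 ≤ C j :=
    nonneg_of_mul_nonneg_left ((sq_nonneg _).trans (hg j 0)) (add_pos (Psi_pos _ _) (Psi_pos _ _))
  calc ‖∏ j, g j (ξ j)‖ ^ 2
      ≤ (∏ j, ‖g j (ξ j)‖) ^ 2 := by gcongr; exact Finset.norm_prod_le _ fun j => g j (ξ j)
    _ = ∏ j, ‖g j (ξ j)‖ ^ 2 := (Finset.prod_pow _ _ _).symm
    _ ≤ ∏ j, C j * ∑ b : Bool,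
          Psi a (Real.pi * (δ j * ξ j / Real.pi - (if b then 1 else -1) * κ j)) := by
      gcongr with j
      exact (hg j (ξ j)).trans_eq (by rw [Psi_sub_add_Psi_add_eq_sum_bool _ _ _ Real.pi_ne_zero])
    _ = (∏ j, C j) * ∏ j, ∑ b : Bool,
          Psi a (Real.pi * (δ j * ξ j / Real.pi - (if b then 1 else -1) * κ j)) :=
      Finset.prod_mul_distrib
    _ ≤ _ := mul_le_mul_of_nonneg_left (prod_sum_Psi_mul_le ha Real.pi _)
      (Finset.prod_nonneg fun j _ => hC j)

/-- **Fourier decay of tensor-product wave packets.**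
If each `g_j : ℝ → ℂ` satisfies the one-dimensional envelope bound
`|g_j(ξ)|² ≤ 2A²δ_j Σ_{σ=±1} Ψ_{2a}(δ_j ξ − σπ(k_j+1/2))`, then the product
`∏_j g_j(ξ_j)` satisfies the `d`-dimensional bound
`|∏_j g_j(ξ_j)|² ≤ 2^d A^{2d} (∏_j δ_j) Σ_{σ∈{±1}^d} Ψ_{2a}(π |τ(ξ) − σ∘(k+½𝟙)|)`,
where `τ(ξ)_j = π^{-1} δ_j ξ_j`. -/
theorem stmt10 (d : ℕ) (A a : ℝ) (hA : 0 < A) (ha : 0 < a)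
    (δ : Fin d → ℝ) (hδ : ∀ j, δ j ∈ Set.Ioc (0 : ℝ) 1)
    (k : Fin d → ℕ) (g : Fin d → ℝ → ℂ)
    (hg : ∀ j (ξ : ℝ), ‖g j ξ‖ ^ 2 ≤ 2 * A ^ 2 * δ j *
      (Psi (2 * a) (δ j * ξ - Real.pi * ((k j : ℝ) + 1 / 2)) +
        Psi (2 * a) (δ j * ξ + Real.pi * ((k j : ℝ) + 1 / 2)))) :
    ∀ ξ : Fin d → ℝ,
      ‖∏ j, g j (ξ j)‖ ^ 2 ≤ 2 ^ d * A ^ (2 * d) * (∏ j, δ j) *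
        ∑ σ : Fin d → Bool,
          Psi (2 * a) (Real.pi * Real.sqrt (∑ j,
            (δ j * ξ j / Real.pi - (if σ j then 1 else -1) * ((k j : ℝ) + 1 / 2)) ^ 2)) := by
  intro ξ
  simpa [Finset.prod_mul_distrib, mul_pow, ← pow_mul] using
    stmt10_general (by positivity) (fun j => 2 * A ^ 2 * δ j) δ (fun j => k j + 1 / 2) g hg ξ
end

section
/- Let r ≥ 1, let I, J ⊂ ℝ be intervals, and suppose f : I → ℝ is in the Gevrey class G^r_0(C,R), g : J → ℝ is in G^r_0(D,S), and f(I) ⊂ J. Then the composition g ∘ f : I → ℝ is in G^r_0(D, T) with T = R(1 + CS); that is, |(g∘f)^{(k)}(x)| ≤ D (R(1+CS))^k (k!)^r for all x ∈ I and all integers k ≥ 0. -/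
/-!
By Faà di Bruno's formula, the `n`-th derivative of `g ∘ f` is a sum over the partitions of an
`n`-element set. A partition into `m` parts of sizes `k₁, …, kₘ` contributes at most
`D R ^ n (C S) ^ m w ^ r`, where `w = m! k₁! ⋯ kₘ!`. Adjoining one element to the set shows by
induction both that `w ≤ n!`, whence `w ^ r ≤ w (n!) ^ (r - 1)`, and that the sum of `w X ^ m`
over all partitions is `n! X (1 + X) ^ (n - 1)` when `n ≥ 1`. Evaluating at `X = C S` gives
the bound.
-/

open Finset Function Polynomial
open scoped ContDiff Nat

section Combinatorics

variable {n : ℕ}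

theorem sum_partSize (c : OrderedFinpartition n) : ∑ i, c.partSize i = n := by
  simpa only [sum_const, card_univ, Fintype.card_fin, smul_eq_mul, mul_one] using
    c.sum_sigma_eq_sum fun _ ↦ (1 : ℕ)

/-- The number `m! k₁! ⋯ kₘ!` attached to a partition into `m` parts of sizes `k₁, …, kₘ`: the
factor by which factorial growth of derivatives enters the corresponding term of Faà di Bruno's
formula. -/
def factorialWeight (c : OrderedFinpartition n) : ℕ :=
  c.length ! * ∏ i, (c.partSize i)!

theorem factorialWeight_extendLeft (c : OrderedFinpartition n) :
    factorialWeight c.extendLeft = (c.length + 1) * factorialWeight c := by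
  have prod_partSize : ∏ i, (c.extendLeft.partSize i)! = ∏ i, (c.partSize i)! :=
    (Fin.prod_univ_succ fun i : Fin (c.length + 1) ↦
      ((Fin.cons 1 c.partSize : Fin (c.length + 1) → ℕ) i)!).trans (by simp)
  rw [factorialWeight, prod_partSize, OrderedFinpartition.extendLeft_length, Nat.factorial_succ,
    mul_assoc, factorialWeight]

theorem factorialWeight_extendMiddle (c : OrderedFinpartition n) (k : Fin c.length) :
    factorialWeight (c.extendMiddle k) = (c.partSize k + 1) * factorialWeight c := by
  have prod_partSize : ∏ i, (update c.partSize k (c.partSize k + 1) i)! =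
      (c.partSize k + 1) * ∏ i, (c.partSize i)! := by
    simp only [apply_update (fun _ ↦ Nat.factorial)]
    rw [prod_update_of_mem (mem_univ k), ← mul_prod_erase univ (fun i ↦ (c.partSize i)!)
      (mem_univ k), Nat.factorial_succ, mul_assoc, sdiff_singleton_eq_erase]
  exact (congrArg (c.length ! * ·) prod_partSize).trans (mul_left_comm _ _ _)

theorem factorialWeight_le_factorial (c : OrderedFinpartition n) : factorialWeight c ≤ n ! := by
  induction n with
  | zero =>
    rw [Subsingleton.elim c default]
    simp [factorialWeight]
  | succ n ih =>
    obtain ⟨⟨c, _ | k⟩, rfl⟩ := (OrderedFinpartition.extendEquiv n).surjective c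
    · exact (factorialWeight_extendLeft c).trans_le
        (Nat.mul_le_mul (Nat.succ_le_succ c.length_le) (ih c))
    · exact (factorialWeight_extendMiddle c k).trans_le
        (Nat.mul_le_mul (Nat.succ_le_succ (c.partSize_le k)) (ih c))

theorem sum_orderedFinpartition_succ {M : Type*} [AddCommMonoid M]
    (a : OrderedFinpartition (n + 1) → M) :
    ∑ c, a c = ∑ c : OrderedFinpartition n, (a c.extendLeft + ∑ k, a (c.extendMiddle k)) := by
  rw [← (OrderedFinpartition.extendEquiv n).sum_comp, Fintype.sum_sigma]
  exact sum_congr rfl fun c _ ↦ Fintype.sum_option _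

/-- The generating polynomial of the weights `factorialWeight c` by the number of parts of `c`. -/
noncomputable def factorialWeightPolynomial (n : ℕ) : ℕ[X] :=
  ∑ c : OrderedFinpartition n, (factorialWeight c : ℕ[X]) * X ^ c.length

theorem factorialWeightPolynomial_zero : factorialWeightPolynomial 0 = 1 := by
  simp [factorialWeightPolynomial, factorialWeight]

theorem X_mul_derivative_X_pow {A : Type*} [CommSemiring A] (m : ℕ) :
    X * derivative (X ^ m : A[X]) = (m : A[X]) * X ^ m := by
  cases m with
  | zero => simp
  | succ m =>
    rw [derivative_X_pow_succ, pow_succ, map_add, map_natCast, map_one, Nat.cast_succ]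
    ring

theorem factorialWeightPolynomial_succ (n : ℕ) :
    factorialWeightPolynomial (n + 1) = (X + (n : ℕ[X])) * factorialWeightPolynomial n +
      X * (1 + X) * derivative (factorialWeightPolynomial n) := by
  have sum_extend (c : OrderedFinpartition n) :
      (factorialWeight c.extendLeft : ℕ[X]) * X ^ c.extendLeft.length +
          ∑ k, (factorialWeight (c.extendMiddle k) : ℕ[X]) * X ^ (c.extendMiddle k).length =
        (X + (n : ℕ[X])) * ((factorialWeight c : ℕ[X]) * X ^ c.length) +
          X * (1 + X) * ((factorialWeight c : ℕ[X]) * derivative (X ^ c.length)) := by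
    have sum_partSize_add_one : ∑ k, ((c.partSize k : ℕ[X]) + 1) = n + c.length := by
      rw [sum_add_distrib, ← Nat.cast_sum, sum_partSize]
      simp
    simp only [factorialWeight_extendLeft, factorialWeight_extendMiddle,
      OrderedFinpartition.extendLeft_length, OrderedFinpartition.extendMiddle_length,
      Nat.cast_mul, Nat.cast_add, Nat.cast_one, mul_assoc]
    rw [← sum_mul, sum_partSize_add_one]
    calc
      _ = (X + (n : ℕ[X])) * ((factorialWeight c : ℕ[X]) * X ^ c.length) +
          (1 + X) * (factorialWeight c : ℕ[X]) * ((c.length : ℕ[X]) * X ^ c.length) := by ring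
      _ = _ := by
        rw [← X_mul_derivative_X_pow]
        ring
  rw [factorialWeightPolynomial, sum_orderedFinpartition_succ]
  simp only [sum_extend, factorialWeightPolynomial, derivative_sum, derivative_natCast_mul,
    sum_add_distrib, mul_sum]

theorem factorialWeightPolynomial_succ_eq (n : ℕ) :
    factorialWeightPolynomial (n + 1) = ((n + 1)! : ℕ[X]) * X * (1 + X) ^ n := by
  induction n with
  | zero => simp [factorialWeightPolynomial_succ, factorialWeightPolynomial_zero]
  | succ n ih =>
    rw [factorialWeightPolynomial_succ, ih, Nat.factorial_succ (n + 1)]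
    have derivative_closed_form : derivative (((n + 1)! : ℕ[X]) * X * (1 + X) ^ n) =
        ((n + 1)! : ℕ[X]) * (1 + X) ^ n + ((n + 1)! : ℕ[X]) *
          X * ((n : ℕ[X]) * (1 + X) ^ (n - 1)) := by
      simp [derivative_mul, derivative_pow]
    rw [derivative_closed_form, Nat.cast_mul, Nat.cast_succ (n + 1), Nat.cast_succ n]
    cases n with
    | zero =>
      rw [Nat.cast_zero]
      ring
    | succ n =>
      rw [Nat.add_sub_cancel, Nat.cast_succ]
      ring

theorem sum_factorialWeight_mul_pow_le {x : ℝ} (hx : 0 ≤ x) (n : ℕ) :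
    ∑ c : OrderedFinpartition n, factorialWeight c * x ^ c.length ≤ n ! * (1 + x) ^ n := by
  have sum_eq_aeval : ∑ c : OrderedFinpartition n, factorialWeight c * x ^ c.length =
      aeval x (factorialWeightPolynomial n) := by
    simp [factorialWeightPolynomial]
  rw [sum_eq_aeval]
  cases n with
  | zero => simp [factorialWeightPolynomial_zero]
  | succ n =>
    calc aeval x (factorialWeightPolynomial (n + 1)) = (n + 1)! * x * (1 + x) ^ n := by
          simp [factorialWeightPolynomial_succ_eq]
      _ ≤ (n + 1)! * (1 + x) * (1 + x) ^ n := by gcongr; linarith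
      _ = (n + 1)! * (1 + x) ^ (n + 1) := by ring

theorem factorialWeight_rpow_le {r : ℝ} (hr : 1 ≤ r) (c : OrderedFinpartition n) :
    (factorialWeight c : ℝ) ^ r ≤ (n ! : ℝ) ^ (r - 1) * factorialWeight c := by
  have weight_pos : 0 < (factorialWeight c : ℝ) := by
    unfold factorialWeight
    positivity
  calc (factorialWeight c : ℝ) ^ r = (factorialWeight c : ℝ) ^ (r - 1) * factorialWeight c := by
        rw [← Real.rpow_add_one weight_pos.ne', sub_add_cancel]
    _ ≤ (n ! : ℝ) ^ (r - 1) * factorialWeight c := by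
        gcongr
        exact factorialWeight_le_factorial c

end Combinatorics

section Composition

variable {𝕜 E F G : Type*} [NontriviallyNormedField 𝕜]
  [NormedAddCommGroup E] [NormedSpace 𝕜 E] [NormedAddCommGroup F] [NormedSpace 𝕜 F]
  [NormedAddCommGroup G] [NormedSpace 𝕜 G]
  {n : ℕ} {r C R D S : ℝ} {s : Set E} {t : Set F}

theorem norm_compAlongOrderedFinpartition_le_of_gevrey
    {q : FormalMultilinearSeries 𝕜 F G} {p : FormalMultilinearSeries 𝕜 E F}
    (hq : ∀ i ≤ n, ‖q i‖ ≤ D * S ^ i * (i ! : ℝ) ^ r)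
    (hp : ∀ i, 1 ≤ i → i ≤ n → ‖p i‖ ≤ C * R ^ i * (i ! : ℝ) ^ r) (c : OrderedFinpartition n) :
    ‖q.compAlongOrderedFinpartition p c‖ ≤
      D * R ^ n * (C * S) ^ c.length * (factorialWeight c : ℝ) ^ r := by
  have norm_q_le := hq c.length c.length_le
  calc ‖q.compAlongOrderedFinpartition p c‖
      ≤ ‖q c.length‖ * ∏ i, ‖p (c.partSize i)‖ := c.norm_compAlongOrderedFinpartition_le _ _
    _ ≤ (D * S ^ c.length * (c.length ! : ℝ) ^ r) *
          ∏ i, (C * R ^ c.partSize i * ((c.partSize i)! : ℝ) ^ r) := by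
        gcongr with i
        · exact (norm_nonneg _).trans norm_q_le
        · exact hp _ (c.partSize_pos i) (c.partSize_le i)
    _ = (D * S ^ c.length * (c.length ! : ℝ) ^ r) *
          (C ^ c.length * R ^ n * (∏ i, ((c.partSize i)! : ℝ)) ^ r) := by
        rw [prod_mul_distrib, prod_mul_distrib, prod_pow_eq_pow_sum, sum_partSize,
          Real.finsetProd_rpow _ _ fun _ _ ↦ Nat.cast_nonneg _]
        simp
    _ = D * R ^ n * (C * S) ^ c.length * (factorialWeight c : ℝ) ^ r := by
        rw [factorialWeight, Nat.cast_mul, Nat.cast_prod,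
          Real.mul_rpow (by positivity) (by positivity), mul_pow]
        ring

theorem norm_taylorComp_le_of_gevrey
    {q : FormalMultilinearSeries 𝕜 F G} {p : FormalMultilinearSeries 𝕜 E F} (hr : 1 ≤ r)
    (hC : 0 ≤ C) (hR : 0 ≤ R) (hD : 0 ≤ D) (hS : 0 ≤ S)
    (hq : ∀ i ≤ n, ‖q i‖ ≤ D * S ^ i * (i ! : ℝ) ^ r)
    (hp : ∀ i, 1 ≤ i → i ≤ n → ‖p i‖ ≤ C * R ^ i * (i ! : ℝ) ^ r) :
    ‖q.taylorComp p n‖ ≤ D * (R * (1 + C * S)) ^ n * (n ! : ℝ) ^ r := by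
  calc ‖q.taylorComp p n‖
      ≤ ∑ c : OrderedFinpartition n, D * R ^ n * (C * S) ^ c.length *
          (factorialWeight c : ℝ) ^ r :=
        norm_sum_le_of_le _ fun c _ ↦
          norm_compAlongOrderedFinpartition_le_of_gevrey hq hp c
    _ ≤ ∑ c : OrderedFinpartition n, D * R ^ n * (C * S) ^ c.length *
          ((n ! : ℝ) ^ (r - 1) * factorialWeight c) := by
        gcongr with c
        exact factorialWeight_rpow_le hr c
    _ = D * R ^ n * (n ! : ℝ) ^ (r - 1) *
          ∑ c : OrderedFinpartition n, factorialWeight c * (C * S) ^ c.length := by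
        rw [mul_sum]
        exact sum_congr rfl fun c _ ↦ by ring
    _ ≤ D * R ^ n * (n ! : ℝ) ^ (r - 1) * (n ! * (1 + C * S) ^ n) := by
        gcongr
        exact sum_factorialWeight_mul_pow_le (by positivity) n
    _ = D * (R * (1 + C * S)) ^ n * ((n ! : ℝ) ^ (r - 1) * n !) := by
        rw [mul_pow]
        ring
    _ = D * (R * (1 + C * S)) ^ n * (n ! : ℝ) ^ r := by
        rw [← Real.rpow_add_one (by positivity), sub_add_cancel]

theorem norm_iteratedFDerivWithin_comp_le_of_gevrey {N : ℕ∞ω} {g : F → G} {f : E → F}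
    {x : E} (hr : 1 ≤ r) (hC : 0 ≤ C) (hR : 0 ≤ R) (hD : 0 ≤ D) (hS : 0 ≤ S)
    (hg : ContDiffWithinAt 𝕜 N g t (f x)) (hf : ContDiffWithinAt 𝕜 N f s x) (hn : n ≤ N)
    (ht : UniqueDiffOn 𝕜 t) (hs : UniqueDiffOn 𝕜 s) (hst : Set.MapsTo f s t) (hx : x ∈ s)
    (hgb : ∀ i ≤ n, ‖iteratedFDerivWithin 𝕜 i g t (f x)‖ ≤ D * S ^ i * (i ! : ℝ) ^ r)
    (hfb : ∀ i, 1 ≤ i → i ≤ n →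
      ‖iteratedFDerivWithin 𝕜 i f s x‖ ≤ C * R ^ i * (i ! : ℝ) ^ r) :
    ‖iteratedFDerivWithin 𝕜 n (g ∘ f) s x‖ ≤ D * (R * (1 + C * S)) ^ n * (n ! : ℝ) ^ r := by
  rw [iteratedFDerivWithin_comp hg hf ht hs hx hst hn]
  exact norm_taylorComp_le_of_gevrey hr hC hR hD hS hgb hfb

variable (𝕜) in
/-- The Gevrey class `G^r_0(C, R)` of functions on `s`, for maps between normed spaces: the `k`-th
derivative is measured by its operator norm as a multilinear map. -/
structure IsGevreyOn (r C R : ℝ) (f : E → F) (s : Set E) : Prop where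
  contDiffOn : ContDiffOn 𝕜 ∞ f s
  norm_iteratedFDerivWithin_le : ∀ k : ℕ, ∀ x ∈ s,
    ‖iteratedFDerivWithin 𝕜 k f s x‖ ≤ C * R ^ k * (k ! : ℝ) ^ r

theorem isGevreyOn_iff_iteratedDerivWithin {f : 𝕜 → F} {s : Set 𝕜} :
    IsGevreyOn 𝕜 r C R f s ↔ ContDiffOn 𝕜 ∞ f s ∧ ∀ k : ℕ, ∀ x ∈ s,
      ‖iteratedDerivWithin k f s x‖ ≤ C * R ^ k * (k ! : ℝ) ^ r := by
  simp only [← norm_iteratedFDerivWithin_eq_norm_iteratedDerivWithin (𝕜 := 𝕜)]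
  exact ⟨fun h ↦ ⟨h.1, h.2⟩, fun h ↦ ⟨h.1, h.2⟩⟩

theorem uniqueDiffOn_or_subsingleton_of_convex {I : Set ℝ} (hI : Convex ℝ I) :
    UniqueDiffOn ℝ I ∨ I.Subsingleton :=
  I.subsingleton_or_nontrivial.symm.imp_left fun h ↦
    uniqueDiffOn_convex hI (hI.nontrivial_iff_nonempty_interior.1 h)

theorem comp_eqOn_const_of_subsingleton {α β γ : Type*} {g : β → γ} {f : α → β} {s : Set α}
    {t : Set β} (hst : Set.MapsTo f s t) (h : s.Subsingleton ∨ t.Subsingleton) {x : α}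
    (hx : x ∈ s) : Set.EqOn (g ∘ f) (fun _ ↦ g (f x)) s := fun _ hy ↦
  congrArg g (h.elim (fun hs ↦ congrArg f (hs hy hx)) fun ht ↦ ht (hst hy) (hst hx))

theorem stmt16_general {g : F → G} {f : E → F} (hr : 1 ≤ r)
    (hC : 0 ≤ C) (hR : 0 ≤ R) (hD : 0 ≤ D) (hS : 0 ≤ S)
    (hs : UniqueDiffOn 𝕜 s ∨ s.Subsingleton) (ht : UniqueDiffOn 𝕜 t ∨ t.Subsingleton)
    (hg : IsGevreyOn 𝕜 r D S g t) (hf : IsGevreyOn 𝕜 r C R f s) (hst : Set.MapsTo f s t) :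
    IsGevreyOn 𝕜 r D (R * (1 + C * S)) (g ∘ f) s := by
  refine ⟨hg.contDiffOn.comp hf.contDiffOn hst, fun k x hx ↦ ?_⟩
  by_cases degenerate : s.Subsingleton ∨ t.Subsingleton
  · have comp_const := comp_eqOn_const_of_subsingleton (g := g) hst degenerate hx
    rw [iteratedFDerivWithin_congr comp_const hx]
    rcases eq_or_ne k 0 with rfl | hk
    · simpa using hg.norm_iteratedFDerivWithin_le 0 (f x) (hst hx)
    · rw [iteratedFDerivWithin_const_of_ne hk, Pi.zero_apply, norm_zero]
      positivity
  · obtain ⟨hs', ht'⟩ := not_or.1 degenerate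
    exact norm_iteratedFDerivWithin_comp_le_of_gevrey hr hC hR hD hS
      (hg.contDiffOn (f x) (hst hx)) (hf.contDiffOn x hx) (mod_cast le_top)
      (ht.resolve_right ht') (hs.resolve_right hs') hst hx
      (fun i _ ↦ hg.norm_iteratedFDerivWithin_le i (f x) (hst hx))
      (fun i _ _ ↦ hf.norm_iteratedFDerivWithin_le i x hx)

end Composition

/-- **Gevrey classes are closed under composition.**
If `f ∈ G^r_0(C,R)` on an interval `I`, `g ∈ G^r_0(D,S)` on an interval `J`, and
`f(I) ⊆ J`, then `g ∘ f ∈ G^r_0(D, R(1+CS))` on `I`. -/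
theorem stmt16 (r : ℝ) (hr : 1 ≤ r) (I J : Set ℝ) (hI : Convex ℝ I) (hJ : Convex ℝ J)
    (f g : ℝ → ℝ) (C R D S : ℝ) (hC : 0 < C) (hR : 0 < R) (hD : 0 < D) (hS : 0 < S)
    (hf : ContDiffOn ℝ (⊤ : ℕ∞) f I) (hg : ContDiffOn ℝ (⊤ : ℕ∞) g J)
    (hmaps : Set.MapsTo f I J)
    (hfb : ∀ k : ℕ, ∀ x ∈ I,
      |iteratedDerivWithin k f I x| ≤ C * R ^ k * (Nat.factorial k : ℝ) ^ r)
    (hgb : ∀ k : ℕ, ∀ y ∈ J,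
      |iteratedDerivWithin k g J y| ≤ D * S ^ k * (Nat.factorial k : ℝ) ^ r) :
    ∀ k : ℕ, ∀ x ∈ I,
      |iteratedDerivWithin k (g ∘ f) I x|
        ≤ D * (R * (1 + C * S)) ^ k * (Nat.factorial k : ℝ) ^ r :=
  (isGevreyOn_iff_iteratedDerivWithin.1 (stmt16_general hr hC.le hR.le hD.le hS.le
    (uniqueDiffOn_or_subsingleton_of_convex hI) (uniqueDiffOn_or_subsingleton_of_convex hJ)
    (isGevreyOn_iff_iteratedDerivWithin.2 ⟨hg, hgb⟩)
    (isGevreyOn_iff_iteratedDerivWithin.2 ⟨hf, hfb⟩) hmaps)).2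
end

section
/- Let B : ℝ → ℝ be a C^∞ function such that (a) B is supported in [−2,2], and (b) B is in the Gevrey class G^{3/2}_0(C,R) for some C, R > 0, i.e., |B^{(k)}(x)| ≤ C R^k (k!)^{3/2} for all x ∈ ℝ and k ≥ 0. Set A = 12C and a = 1/(2e R^{2/3}). Then the Fourier transform F[B](ξ) = ∫_ℝ B(x) e^{−i x ξ} dx satisfies |F[B](ξ)| ≤ A · exp(−a·|ξ|^{2/3}) for all ξ ∈ ℝ. -/
/-!
Taking Fourier transforms of the `k`-th derivative of a Gevrey function of order `r` gives
`|ξ| ^ k * ‖F f ξ‖ ≤ M * R ^ k * (k!) ^ r` for every `k`. One usually picks the best `k`; it is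
cleaner to use all of them. With `t = (|ξ| / R) ^ (1 / r)` the `r`-th root of the bound reads
`‖F f ξ‖ ^ (1 / r) * t ^ k / k! ≤ M ^ (1 / r)`, and weighting by `θ ^ k` with `θ < 1` and summing
over `k` turns the left side into an exponential and the right side into a geometric series:
`‖F f ξ‖ ≤ M * (1 - θ) ^ (-r) * exp (-r * θ * t)`.
-/

open MeasureTheory Set Function Real
open scoped ContDiff FourierTransform Nat

section Growth

variable {G M r s θ : ℝ}

theorem mul_exp_le_of_forall_mul_pow_le_mul_factorial (hθ₀ : 0 ≤ θ) (hθ₁ : θ < 1)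
    (h : ∀ k : ℕ, G * s ^ k ≤ M * k !) : G * exp (θ * s) ≤ M * (1 - θ)⁻¹ := by
  have hexp : HasSum (fun k : ℕ => (θ * s) ^ k / k !) (exp (θ * s)) := by
    rw [exp_eq_exp_ℝ]
    exact NormedSpace.expSeries_div_hasSum_exp (θ * s)
  have hgeom : HasSum (fun k : ℕ => θ ^ k) (1 - θ)⁻¹ := hasSum_geometric_of_lt_one hθ₀ hθ₁
  refine hasSum_le (fun k => ?_) (hexp.mul_left G) (hgeom.mul_left M)
  calc G * ((θ * s) ^ k / k !) = θ ^ k * (G * s ^ k / k !) := by ring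
    _ ≤ θ ^ k * M := by
        gcongr
        exact (div_le_iff₀ (by positivity)).2 (h k)
    _ = M * θ ^ k := mul_comm _ _

theorem le_mul_exp_neg_of_forall_mul_pow_le_mul_factorial_rpow (hr : 0 < r) (hG : 0 ≤ G)
    (hs : 0 ≤ s) (hθ₀ : 0 ≤ θ) (hθ₁ : θ < 1) (h : ∀ k : ℕ, G * s ^ k ≤ M * (k ! : ℝ) ^ r) :
    G ≤ M * (1 - θ) ^ (-r) * exp (-(r * θ) * s ^ r⁻¹) := by
  have hM : 0 ≤ M := hG.trans (by simpa using h 0)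
  have hθ : 0 ≤ 1 - θ := sub_nonneg.2 hθ₁.le
  have hroot (k : ℕ) : G ^ r⁻¹ * (s ^ r⁻¹) ^ k ≤ M ^ r⁻¹ * k ! := by
    calc G ^ r⁻¹ * (s ^ r⁻¹) ^ k = (G * s ^ k) ^ r⁻¹ := by
          rw [mul_rpow hG (by positivity), rpow_pow_comm hs]
      _ ≤ (M * (k ! : ℝ) ^ r) ^ r⁻¹ := rpow_le_rpow (by positivity) (h k) (by positivity)
      _ = M ^ r⁻¹ * k ! := by
          rw [mul_rpow hM (by positivity), rpow_rpow_inv (by positivity) hr.ne']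
  have hsum := mul_exp_le_of_forall_mul_pow_le_mul_factorial hθ₀ hθ₁ hroot
  have hpow : G * exp (r * θ * s ^ r⁻¹) ≤ M * (1 - θ) ^ (-r) := by
    calc G * exp (r * θ * s ^ r⁻¹) = (G ^ r⁻¹ * exp (θ * s ^ r⁻¹)) ^ r := by
          rw [mul_rpow (by positivity) (by positivity), rpow_inv_rpow hG hr.ne', ← exp_mul]
          ring_nf
      _ ≤ (M ^ r⁻¹ * (1 - θ)⁻¹) ^ r := by gcongr
      _ = M * (1 - θ) ^ (-r) := by
          rw [mul_rpow (by positivity) (by positivity), rpow_inv_rpow hM hr.ne', inv_rpow hθ,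
            rpow_neg hθ]
  rwa [neg_mul, exp_neg, ← div_eq_mul_inv, le_div_iff₀ (exp_pos _)]

end Growth

section Fourier

variable {E : Type*} [NormedAddCommGroup E] [NormedSpace ℂ E] {f : ℝ → E}

theorem abs_pow_mul_norm_fourier_le (hf : ContDiff ℝ ∞ f)
    (hint : ∀ k, Integrable (iteratedDeriv k f)) (k : ℕ) (w : ℝ) :
    |2 * π * w| ^ k * ‖𝓕 f w‖ ≤ ∫ x, ‖iteratedDeriv k f x‖ := by
  calc |2 * π * w| ^ k * ‖𝓕 f w‖ = ‖𝓕 (iteratedDeriv k f) w‖ := by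
        rw [fourier_iteratedDeriv hf (fun n _ => hint n) (by exact_mod_cast le_top)]
        simp [norm_smul, abs_mul]
    _ ≤ ∫ x, ‖iteratedDeriv k f x‖ :=
        VectorFourier.norm_fourierIntegral_le_integral_norm _ _ _ _ _

theorem norm_fourier_le_of_integral_norm_iteratedDeriv_le {M R r θ : ℝ} (hr : 0 < r) (hR : 0 < R)
    (hθ₀ : 0 ≤ θ) (hθ₁ : θ < 1) (hf : ContDiff ℝ ∞ f)
    (hint : ∀ k, Integrable (iteratedDeriv k f))
    (hM : ∀ k : ℕ, ∫ x, ‖iteratedDeriv k f x‖ ≤ M * R ^ k * (k ! : ℝ) ^ r) (w : ℝ) :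
    ‖𝓕 f w‖ ≤ M * (1 - θ) ^ (-r) * exp (-(r * θ) * (|2 * π * w| / R) ^ r⁻¹) := by
  refine le_mul_exp_neg_of_forall_mul_pow_le_mul_factorial_rpow hr (norm_nonneg _)
    (by positivity) hθ₀ hθ₁ fun k => ?_
  rw [div_pow, ← mul_div_assoc, div_le_iff₀ (by positivity)]
  calc ‖𝓕 f w‖ * |2 * π * w| ^ k ≤ M * R ^ k * (k ! : ℝ) ^ r := by
        rw [mul_comm]
        exact (abs_pow_mul_norm_fourier_le hf hint k w).trans (hM k)
    _ = M * (k ! : ℝ) ^ r * R ^ k := mul_right_comm _ _ _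

theorem integral_cexp_smul_eq_fourier (f : ℝ → E) (ξ : ℝ) :
    ∫ x : ℝ, Complex.exp (-(Complex.I * x * ξ)) • f x = 𝓕 f (ξ / (2 * π)) := by
  rw [fourier_real_eq_integral_exp_smul]
  congr! 4 with x
  push_cast
  field_simp

end Fourier

theorem support_iteratedDeriv_subset_tsupport {𝕜 F : Type*} [NontriviallyNormedField 𝕜]
    [NormedAddCommGroup F] [NormedSpace 𝕜 F] (k : ℕ) (f : 𝕜 → F) :
    support (iteratedDeriv k f) ⊆ tsupport f := fun x hx =>
  support_iteratedFDeriv_subset (𝕜 := 𝕜) k <| by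
    rwa [mem_support, ← norm_ne_zero_iff, norm_iteratedFDeriv_eq_norm_iteratedDeriv,
      norm_ne_zero_iff]

/-- The Gevrey class `G^r_0(C, R)`, for functions on `ℝ` with values in a normed
space: smooth functions whose `k`-th derivative is bounded by `C * R ^ k * (k!) ^ r` on the whole
line, for every `k`. -/
structure IsGevrey {E : Type*} [NormedAddCommGroup E] [NormedSpace ℝ E] (r C R : ℝ) (f : ℝ → E) :
    Prop where
  contDiff : ContDiff ℝ ∞ f
  norm_iteratedDeriv_le : ∀ (k : ℕ) (x : ℝ), ‖iteratedDeriv k f x‖ ≤ C * R ^ k * (k ! : ℝ) ^ r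

namespace IsGevrey

variable {E F : Type*} [NormedAddCommGroup E] [NormedSpace ℝ E] [NormedAddCommGroup F]
  [NormedSpace ℝ F] {r C R : ℝ} {f : ℝ → E} {K : Set ℝ}

theorem linearIsometry_comp (hf : IsGevrey r C R f) (g : E →ₗᵢ[ℝ] F) :
    IsGevrey r C R (g ∘ f) where
  contDiff := g.contDiff.comp hf.contDiff
  norm_iteratedDeriv_le k x := by
    rw [← norm_iteratedFDeriv_eq_norm_iteratedDeriv,
      g.norm_iteratedFDeriv_comp_left hf.contDiff.contDiffAt (by exact_mod_cast le_top),
      norm_iteratedFDeriv_eq_norm_iteratedDeriv]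
    exact hf.norm_iteratedDeriv_le k x

theorem integrable_iteratedDeriv (hf : IsGevrey r C R f) (hfK : tsupport f ⊆ K)
    (hK : volume K ≠ ⊤) (k : ℕ) : Integrable (iteratedDeriv k f) := by
  rw [← integrableOn_iff_integrable_of_support_subset
    ((support_iteratedDeriv_subset_tsupport k f).trans hfK)]
  exact IntegrableOn.of_bound hK.lt_top
    (hf.contDiff.continuous_iteratedDeriv k (by exact_mod_cast le_top)).aestronglyMeasurable _
    (.of_forall (hf.norm_iteratedDeriv_le k))

theorem integral_norm_iteratedDeriv_le (hf : IsGevrey r C R f) (hfK : tsupport f ⊆ K)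
    (hK : volume K ≠ ⊤) (k : ℕ) :
    ∫ x, ‖iteratedDeriv k f x‖ ≤ C * volume.real K * R ^ k * (k ! : ℝ) ^ r := by
  have hzero (x : ℝ) (hx : x ∉ K) : ‖iteratedDeriv k f x‖ = 0 :=
    norm_eq_zero.2 <| notMem_support.1 fun h =>
      hx (hfK (support_iteratedDeriv_subset_tsupport k f h))
  calc ∫ x, ‖iteratedDeriv k f x‖ = ∫ x in K, ‖iteratedDeriv k f x‖ :=
        (setIntegral_eq_integral_of_forall_compl_eq_zero hzero).symm
    _ ≤ C * R ^ k * (k ! : ℝ) ^ r * volume.real K :=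
        (le_norm_self _).trans <| norm_setIntegral_le_of_norm_le_const hK.lt_top fun x _ =>
          (norm_norm _).trans_le (hf.norm_iteratedDeriv_le k x)
    _ = C * volume.real K * R ^ k * (k ! : ℝ) ^ r := by ring

end IsGevrey

theorem stmt17_general {E : Type*} [NormedAddCommGroup E] [NormedSpace ℂ E] [CompleteSpace E]
    {r C R θ : ℝ} {f : ℝ → E} {K : Set ℝ} (hr : 0 < r) (hR : 0 < R) (hθ₀ : 0 ≤ θ) (hθ₁ : θ < 1)
    (hf : IsGevrey r C R f) (hfK : tsupport f ⊆ K) (hK : volume K ≠ ⊤) (ξ : ℝ) :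
    ‖∫ x : ℝ, Complex.exp (-(Complex.I * x * ξ)) • f x‖ ≤
      C * volume.real K * (1 - θ) ^ (-r) * exp (-(r * θ) * (|ξ| / R) ^ r⁻¹) := by
  have h := norm_fourier_le_of_integral_norm_iteratedDeriv_le hr hR hθ₀ hθ₁ hf.contDiff
    (hf.integrable_iteratedDeriv hfK hK) (hf.integral_norm_iteratedDeriv_le hfK hK) (ξ / (2 * π))
  rwa [mul_div_cancel₀ _ two_pi_pos.ne', ← integral_cexp_smul_eq_fourier] at h

theorem one_div_three_mul_exp_one_le : 1 / (3 * exp 1) ≤ (1 / 6 : ℝ) := by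
  have : 2 ≤ exp 1 := by linarith [add_one_le_exp 1]
  gcongr
  linarith

theorem one_sub_rpow_neg_three_halves_le_three {θ : ℝ} (hθ : θ ≤ 1 / 6) :
    (1 - θ) ^ (-(3 / 2) : ℝ) ≤ 3 := by
  calc (1 - θ) ^ (-(3 / 2) : ℝ) ≤ (5 / 6) ^ (-(3 / 2) : ℝ) :=
        rpow_le_rpow_of_nonpos (by norm_num) (by linarith) (by norm_num)
    _ ≤ (5 / 6) ^ (-2 : ℝ) :=
        rpow_le_rpow_of_exponent_ge (by norm_num) (by norm_num) (by norm_num)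
    _ ≤ 3 := by norm_num [rpow_neg]

-- `θ = 1 / (3 * e)` makes the exponent `3 / 2 * θ` equal to the required `1 / (2 * e)`.
theorem gevrey_three_halves_bound_le {C R : ℝ} (hC : 0 ≤ C) (hR : 0 ≤ R) (ξ : ℝ) :
    C * volume.real (Icc (-2 : ℝ) 2) * (1 - 1 / (3 * exp 1)) ^ (-(3 / 2) : ℝ) *
        exp (-(3 / 2 * (1 / (3 * exp 1))) * (|ξ| / R) ^ (3 / 2 : ℝ)⁻¹) ≤
      12 * C * exp (-(1 / (2 * exp 1 * R ^ (2 / 3 : ℝ))) * |ξ| ^ (2 / 3 : ℝ)) := by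
  have hexponent : -(3 / 2 * (1 / (3 * exp 1))) * (|ξ| / R) ^ (3 / 2 : ℝ)⁻¹ =
      -(1 / (2 * exp 1 * R ^ (2 / 3 : ℝ))) * |ξ| ^ (2 / 3 : ℝ) := by
    rw [inv_div, div_rpow (abs_nonneg ξ) hR]
    ring
  have hvolume : volume.real (Icc (-2 : ℝ) 2) = 4 := by
    norm_num [volume_real_Icc]
  rw [hexponent, hvolume]
  refine mul_le_mul_of_nonneg_right ?_ (exp_pos _).le
  calc C * 4 * (1 - 1 / (3 * exp 1)) ^ (-(3 / 2) : ℝ) ≤ C * 4 * 3 := by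
        gcongr
        exact one_sub_rpow_neg_three_halves_le_three one_div_three_mul_exp_one_le
    _ = 12 * C := by ring

/-- **Near-exponential Fourier decay of compactly supported Gevrey-`3/2` functions.**
If `B : ℝ → ℝ` is `C^∞`, supported in `[-2,2]`, and satisfies the Gevrey bound
`|B^(k)(x)| ≤ C R^k (k!)^{3/2}` for all `x` and `k`, then with `A = 12C` and
`a = 1/(2eR^{2/3})` one has `|F[B](ξ)| ≤ A exp(-a |ξ|^{2/3})` for all `ξ ∈ ℝ`,
where `F[B](ξ) = ∫ B(x) e^{-i x ξ} dx`. -/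
theorem stmt17 (B : ℝ → ℝ) (C R : ℝ) (hC : 0 < C) (hR : 0 < R)
    (hsmooth : ContDiff ℝ (⊤ : ℕ∞) B)
    (hsupp : Function.support B ⊆ Set.Icc (-2 : ℝ) 2)
    (hG : ∀ k : ℕ, ∀ x : ℝ,
      |iteratedDeriv k B x| ≤ C * R ^ k * (Nat.factorial k : ℝ) ^ ((3 : ℝ) / 2)) :
    ∀ ξ : ℝ,
      ‖∫ x : ℝ, (B x : ℂ) * Complex.exp (-(Complex.I * (x : ℂ) * (ξ : ℂ)))‖
        ≤ 12 * C * Real.exp (-(1 / (2 * Real.exp 1 * R ^ ((2 : ℝ) / 3))) * |ξ| ^ ((2 : ℝ) / 3)) := by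
  intro ξ
  have hB : IsGevrey (3 / 2) C R (Complex.ofRealLI ∘ B) :=
    IsGevrey.linearIsometry_comp ⟨hsmooth, hG⟩ Complex.ofRealLI
  have hBK : tsupport (Complex.ofRealLI ∘ B) ⊆ Icc (-2) 2 :=
    (tsupport_comp_subset (map_zero _) B).trans (closure_minimal hsupp isClosed_Icc)
  have h := stmt17_general (θ := 1 / (3 * exp 1)) (by norm_num) hR (by positivity)
    (one_div_three_mul_exp_one_le.trans_lt (by norm_num)) hB hBK measure_Icc_lt_top.ne ξ
  simp only [mul_comm (B _ : ℂ)]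
  exact h.trans (gevrey_three_halves_bound_le hC.le hR.le ξ)
end

section
/- Define v : ℝ → ℝ by v(x) = exp(−(1−x²)^{−2}) for x ∈ (−1,1) and v(x) = 0 for |x| ≥ 1. Then v is C^∞ on ℝ, supp(v) ⊂ [−1,1], and v is in the Gevrey class G^{3/2}_0(1, C₁) with C₁ = 2 + 3√2; that is, ‖v^{(k)}‖_∞ ≤ (2 + 3√2)^k (k!)^{3/2} for all integers k ≥ 0. -/
/-- The bump function `v(x) = exp(-(1-x²)^{-2})` on `(-1,1)`, zero elsewhere. -/
noncomputable def vFun (x : ℝ) : ℝ :=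
  if x ∈ Set.Ioo (-1 : ℝ) 1 then Real.exp (-((1 - x ^ 2) ^ 2)⁻¹) else 0

/-!
Inside `(-1, 1)` the bump is the restriction of the holomorphic function
`F(z) = exp(-(1 - z²)⁻²)`. For real `x` with `d = 1 - |x| > 0`, the disc of radius `d / 2` about
`x` touches the sides of the rhombus with vertices `±1` and half-angle `π / 6` there. On this
rhombus `|arg (1 - z²)| ≤ π / 6`, hence `re (1 - z²)⁻² ≥ |1 - z²|⁻² / 2`. As `|1 - z²| ≤ 3 d` on
the disc, Cauchy's estimate yields `|v⁽ᵏ⁾(x)| ≤ k! (2 / d)ᵏ exp(-(3 d)⁻² / 2)`. Since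
`tⁿ exp(-t² / 2) ≤ √(n!)`, taking `t = (3 d)⁻¹` gives both the bound `6ᵏ (k!)^(3/2)` and the
decay of every derivative at `±1` faster than any power of `d`, which makes the extension by zero
smooth.
-/

section ExtensionByZero

open Set
open scoped ContDiff Topology

variable {𝕜 E : Type*} [NontriviallyNormedField 𝕜] [NormedAddCommGroup E] [NormedSpace 𝕜 E]
  {s : Set 𝕜} {f : 𝕜 → E} {n : ℕ}

lemma hasDerivAt_indicator_of_norm_le_pow {f' : 𝕜 → E} {C : ℝ} (hs : IsOpen s) (hn : 1 < n)
    (hf : ∀ x ∈ s, HasDerivAt f (f' x) x)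
    (hC : ∀ y ∈ s, ∀ x ∉ s, ‖f y‖ ≤ C * ‖y - x‖ ^ n) (x : 𝕜) :
    HasDerivAt (s.indicator f) (s.indicator f' x) x := by
  by_cases hx : x ∈ s
  · rw [indicator_of_mem hx]
    exact (hf x hx).congr_of_eventuallyEq (eqOn_indicator.eventuallyEq_of_mem (hs.mem_nhds hx))
  · have hO : s.indicator f =O[𝓝 x] fun y ↦ ‖y - x‖ ^ n := by
      refine .of_bound |C| (.of_forall fun y ↦ ?_)
      rw [norm_pow, norm_norm]
      by_cases hy : y ∈ s
      · rw [indicator_of_mem hy]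
        exact (hC y hy x hx).trans (by gcongr; exact le_abs_self C)
      · rw [indicator_of_notMem hy, norm_zero]
        positivity
    rw [indicator_of_notMem hx]
    simpa using (hO.hasFDerivAt (𝕜 := 𝕜) hn).hasDerivAt

lemma hasDerivAt_indicator_iteratedDeriv (hs : IsOpen s) (hn : 1 < n) (hf : ContDiffOn 𝕜 ∞ f s)
    (hdecay : ∀ k, ∃ C : ℝ, ∀ y ∈ s, ∀ x ∉ s, ‖iteratedDeriv k f y‖ ≤ C * ‖y - x‖ ^ n)
    (k : ℕ) (x : 𝕜) :
    HasDerivAt (s.indicator (iteratedDeriv k f)) (s.indicator (iteratedDeriv (k + 1) f) x) x := by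
  obtain ⟨C, hC⟩ := hdecay k
  refine hasDerivAt_indicator_of_norm_le_pow hs hn (fun y hy ↦ ?_) hC x
  have hdiff : DifferentiableOn 𝕜 (iteratedDeriv k f) s :=
    (hf.differentiableOn_iteratedDerivWithin (mod_cast ENat.natCast_lt_top k) hs.uniqueDiffOn).congr
      fun z hz ↦ (iteratedDerivWithin_of_isOpen hs hz).symm
  rw [iteratedDeriv_succ]
  exact (hdiff.differentiableAt (hs.mem_nhds hy)).hasDerivAt

lemma iteratedDeriv_indicator (hs : IsOpen s) (hn : 1 < n) (hf : ContDiffOn 𝕜 ∞ f s)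
    (hdecay : ∀ k, ∃ C : ℝ, ∀ y ∈ s, ∀ x ∉ s, ‖iteratedDeriv k f y‖ ≤ C * ‖y - x‖ ^ n) (k : ℕ) :
    iteratedDeriv k (s.indicator f) = s.indicator (iteratedDeriv k f) := by
  induction k with
  | zero => simp only [iteratedDeriv_zero]
  | succ k ih =>
    rw [iteratedDeriv_succ, ih]
    exact funext fun x ↦ (hasDerivAt_indicator_iteratedDeriv hs hn hf hdecay k x).deriv

lemma contDiff_indicator (hs : IsOpen s) (hn : 1 < n) (hf : ContDiffOn 𝕜 ∞ f s)
    (hdecay : ∀ k, ∃ C : ℝ, ∀ y ∈ s, ∀ x ∉ s, ‖iteratedDeriv k f y‖ ≤ C * ‖y - x‖ ^ n) :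
    ContDiff 𝕜 ∞ (s.indicator f) := by
  refine contDiff_of_differentiable_iteratedDeriv fun k _ x ↦ ?_
  rw [iteratedDeriv_indicator hs hn hf hdecay]
  exact (hasDerivAt_indicator_iteratedDeriv hs hn hf hdecay k x).differentiableAt

end ExtensionByZero

lemma iteratedDeriv_re_ofReal {f : ℂ → ℂ} {x : ℝ} (hf : AnalyticAt ℂ f x) (k : ℕ) :
    iteratedDeriv k (fun y : ℝ ↦ (f y).re) x = (iteratedDeriv k f x).re := by
  induction k generalizing x with
  | zero => simp only [iteratedDeriv_zero]
  | succ k ih =>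
    have hnhds : (iteratedDeriv k fun y : ℝ ↦ (f y).re) =ᶠ[nhds x]
        fun y ↦ (iteratedDeriv k f y).re :=
      (Complex.continuous_ofReal.continuousAt.eventually hf.eventually_analyticAt).mono
        fun y hy ↦ ih hy
    have hdiff : DifferentiableAt ℂ (iteratedDeriv k f) x := by
      rw [iteratedDeriv_eq_iterate]
      exact (hf.iterated_deriv k).differentiableAt
    rw [iteratedDeriv_succ, iteratedDeriv_succ, hnhds.deriv_eq]
    exact hdiff.hasDerivAt.real_of_complex.deriv

lemma inv_norm_sq_div_two_le_re_inv_sq {w : ℂ} (hw : 3 * w.im ^ 2 ≤ w.re ^ 2) :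
    ‖w‖⁻¹ ^ 2 / 2 ≤ ((w ^ 2)⁻¹).re := by
  rcases eq_or_ne w 0 with rfl | hw0
  · simp
  have hnorm : ‖w‖ ^ 2 = w.re ^ 2 + w.im ^ 2 := by linarith [Complex.sq_norm_sub_sq_re w]
  have hre : (w ^ 2).re = w.re ^ 2 - w.im ^ 2 := by simp [pow_two]
  calc ‖w‖⁻¹ ^ 2 / 2 = ‖w‖ ^ 2 / 2 / (‖w‖ ^ 2) ^ 2 := by
        have := norm_ne_zero_iff.2 hw0
        field_simp
    _ ≤ (w ^ 2).re / (‖w‖ ^ 2) ^ 2 := by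
        gcongr
        linarith
    _ = ((w ^ 2)⁻¹).re := by rw [Complex.inv_re, Complex.normSq_eq_norm_sq, norm_pow]

lemma pow_mul_exp_neg_sq_div_two_le_sqrt_factorial (t : ℝ) (n : ℕ) :
    t ^ n * Real.exp (-(t ^ 2 / 2)) ≤ √(n.factorial : ℝ) := by
  have hexp : Real.exp (-(t ^ 2 / 2)) ^ 2 = (Real.exp (t ^ 2))⁻¹ := by
    rw [← Real.exp_neg, ← Real.exp_nat_mul]
    congr 1
    ring
  have htaylor : (t ^ 2) ^ n ≤ Real.exp (t ^ 2) * n.factorial :=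
    (div_le_iff₀ (by positivity)).1 (Real.pow_div_factorial_le_exp (t ^ 2) (sq_nonneg t) n)
  apply Real.le_sqrt_of_sq_le
  rw [mul_pow, hexp, ← div_eq_mul_inv, div_le_iff₀' (Real.exp_pos _), pow_right_comm]
  exact htaylor

section Disc

variable {x : ℝ} {z : ℂ}

lemma abs_re_lt_one_of_norm_sub_le (hx : |x| < 1) (hz : ‖z - x‖ ≤ (1 - |x|) / 2) :
    |z.re| < 1 := by
  have hre : |z.re - x| ≤ ‖z - x‖ := by simpa using Complex.abs_re_le_norm (z - x)
  linarith [abs_sub_abs_le_abs_sub z.re x]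

lemma three_mul_im_sq_le_of_norm_sub_le (hz : ‖z - x‖ ≤ (1 - |x|) / 2) :
    3 * z.im ^ 2 ≤ (1 - |z.re|) ^ 2 := by
  set d := 1 - |x|
  set u := |z.re - x| with hu
  have hnorm : u ^ 2 + z.im ^ 2 = ‖z - x‖ ^ 2 := by
    have := Complex.sq_norm_sub_sq_re (z - x)
    simp only [Complex.sub_re, Complex.ofReal_re, Complex.sub_im, Complex.ofReal_im,
      sub_zero] at this
    rw [hu, sq_abs]
    linarith
  have hdisc : u ^ 2 + z.im ^ 2 ≤ (d / 2) ^ 2 := hnorm ▸ by gcongr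
  have hud : u ≤ d / 2 := le_trans (by simpa using Complex.abs_re_le_norm (z - x)) hz
  have hu0 : 0 ≤ u := abs_nonneg _
  calc 3 * z.im ^ 2 ≤ 3 * ((d / 2) ^ 2 - u ^ 2) := by linarith
    _ ≤ (d - u) ^ 2 := by nlinarith [sq_nonneg (d / 2 - 2 * u)]
    _ ≤ (1 - |z.re|) ^ 2 := by
        have hre := abs_sub_abs_le_abs_sub z.re x
        exact pow_le_pow_left₀ (by linarith) (by linarith) 2

lemma re_one_sub_sq (z : ℂ) : (1 - z ^ 2).re = 1 - |z.re| ^ 2 + z.im ^ 2 := by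
  rw [sq_abs]
  simp only [pow_two, Complex.sub_re, Complex.one_re, Complex.mul_re]
  ring

lemma re_one_sub_sq_pos (hz : |z.re| < 1) : 0 < (1 - z ^ 2).re := by
  rw [re_one_sub_sq]
  nlinarith [abs_nonneg z.re, sq_nonneg z.im]

lemma three_mul_im_one_sub_sq_sq_le (hz : |z.re| < 1) (him : 3 * z.im ^ 2 ≤ (1 - |z.re|) ^ 2) :
    3 * (1 - z ^ 2).im ^ 2 ≤ (1 - z ^ 2).re ^ 2 := by
  have : 0 ≤ 1 - |z.re| := by linarith
  calc 3 * (1 - z ^ 2).im ^ 2 = 4 * |z.re| ^ 2 * (3 * z.im ^ 2) := by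
        rw [sq_abs]
        simp only [pow_two, Complex.sub_im, Complex.one_im, Complex.mul_im]
        ring
    _ ≤ 4 * |z.re| ^ 2 * (1 - |z.re|) ^ 2 := by gcongr
    _ = (2 * |z.re| * (1 - |z.re|)) ^ 2 := by ring
    _ ≤ (1 - z ^ 2).re ^ 2 := by
        rw [re_one_sub_sq]
        gcongr
        nlinarith [sq_nonneg z.im, sq_nonneg (1 - |z.re|)]

lemma norm_one_sub_sq_le (hx : |x| ≤ 1) (hz : ‖z - x‖ ≤ (1 - |x|) / 2) :
    ‖1 - z ^ 2‖ ≤ 3 * (1 - |x|) := by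
  have hcenter : ‖((1 - x ^ 2 : ℝ) : ℂ)‖ = 1 - |x| ^ 2 := by
    rw [Complex.norm_real, sq_abs, Real.norm_of_nonneg]
    linarith [(sq_le_one_iff_abs_le_one x).2 hx]
  have hsum : ‖z - x + (2 * x : ℝ)‖ ≤ (1 - |x|) / 2 + 2 * |x| :=
    (norm_add_le _ _).trans (by simpa using hz)
  calc ‖1 - z ^ 2‖ = ‖((1 - x ^ 2 : ℝ) : ℂ) - (z - x) * (z - x + (2 * x : ℝ))‖ := by
        congr 1
        push_cast
        ring
    _ ≤ 1 - |x| ^ 2 + ‖z - x‖ * ‖z - x + (2 * x : ℝ)‖ := by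
        rw [← hcenter, ← norm_mul]
        exact norm_sub_le _ _
    _ ≤ 1 - |x| ^ 2 + (1 - |x|) / 2 * ((1 - |x|) / 2 + 2 * |x|) := by
        gcongr
    _ ≤ 3 * (1 - |x|) := by nlinarith [abs_nonneg x]

end Disc

/-- The function `F(z) = exp(-(1 - z²)⁻²)`, holomorphic off `±1`, whose restriction to `(-1, 1)`
is the bump `vFun`. By the convention `0⁻¹ = 0` it takes the value `1` at `±1`. -/
noncomputable def complexBump (z : ℂ) : ℂ :=
  Complex.exp (-((1 - z ^ 2) ^ 2)⁻¹)

lemma analyticAt_complexBump {z : ℂ} (hz : 1 - z ^ 2 ≠ 0) : AnalyticAt ℂ complexBump z := by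
  have hsq : AnalyticAt ℂ (fun z : ℂ ↦ (1 - z ^ 2) ^ 2) z := by fun_prop
  exact (hsq.inv (pow_ne_zero 2 hz)).neg.cexp

section Bump

open Set Metric
open scoped ContDiff

variable {x : ℝ}

lemma analyticAt_complexBump_of_norm_sub_le {z : ℂ} (hx : |x| < 1)
    (hz : ‖z - x‖ ≤ (1 - |x|) / 2) : AnalyticAt ℂ complexBump z := by
  have hre := re_one_sub_sq_pos (abs_re_lt_one_of_norm_sub_le hx hz)
  exact analyticAt_complexBump fun h ↦ by simp [h] at hre

lemma analyticAt_complexBump_ofReal (hx : |x| < 1) : AnalyticAt ℂ complexBump x :=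
  analyticAt_complexBump_of_norm_sub_le hx (by rw [sub_self, norm_zero]; linarith)

lemma norm_complexBump_le {z : ℂ} (hx : |x| < 1) (hz : ‖z - x‖ ≤ (1 - |x|) / 2) :
    ‖complexBump z‖ ≤ Real.exp (-((3 * (1 - |x|))⁻¹ ^ 2 / 2)) := by
  have hre := abs_re_lt_one_of_norm_sub_le hx hz
  have hpos : 0 < ‖1 - z ^ 2‖ := (re_one_sub_sq_pos hre).trans_le (Complex.re_le_norm _)
  have hsector := three_mul_im_one_sub_sq_sq_le hre (three_mul_im_sq_le_of_norm_sub_le hz)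
  have hexponent : (3 * (1 - |x|))⁻¹ ^ 2 / 2 ≤ (((1 - z ^ 2) ^ 2)⁻¹).re :=
    calc (3 * (1 - |x|))⁻¹ ^ 2 / 2 ≤ ‖1 - z ^ 2‖⁻¹ ^ 2 / 2 := by
          have hnorm := norm_one_sub_sq_le hx.le hz
          gcongr
      _ ≤ (((1 - z ^ 2) ^ 2)⁻¹).re := inv_norm_sq_div_two_le_re_inv_sq hsector
  rw [complexBump, Complex.norm_exp, Complex.neg_re]
  exact Real.exp_le_exp.2 (neg_le_neg hexponent)

lemma norm_iteratedDeriv_complexBump_le (hx : |x| < 1) (k : ℕ) :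
    ‖iteratedDeriv k complexBump x‖ ≤
      k.factorial * Real.exp (-((3 * (1 - |x|))⁻¹ ^ 2 / 2)) / ((1 - |x|) / 2) ^ k := by
  apply Complex.norm_iteratedDeriv_le_of_forall_mem_sphere_norm_le k (by linarith)
  · refine DifferentiableOn.diffContOnCl fun z hz ↦ ?_
    have hz' := mem_closedBall_iff_norm.1 (closure_ball_subset_closedBall hz)
    exact (analyticAt_complexBump_of_norm_sub_le hx hz').differentiableAt.differentiableWithinAt
  · exact fun z hz ↦ norm_complexBump_le hx (mem_sphere_iff_norm.1 hz).le

lemma norm_iteratedDeriv_complexBump_le_mul_pow (hx : |x| < 1) (k m : ℕ) :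
    ‖iteratedDeriv k complexBump x‖ ≤
      k.factorial * 2 ^ k * 3 ^ (k + m) * √((k + m).factorial : ℝ) * (1 - |x|) ^ m := by
  set d := 1 - |x|
  have hd0 : 0 < d := by linarith
  calc ‖iteratedDeriv k complexBump x‖
      ≤ k.factorial * Real.exp (-((3 * d)⁻¹ ^ 2 / 2)) / (d / 2) ^ k :=
        norm_iteratedDeriv_complexBump_le hx k
    _ = k.factorial * 2 ^ k * 3 ^ (k + m) *
          ((3 * d)⁻¹ ^ (k + m) * Real.exp (-((3 * d)⁻¹ ^ 2 / 2))) * d ^ m := by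
        rw [inv_pow _ (k + m), mul_pow 3 d (k + m), div_pow, pow_add d]
        field_simp
    _ ≤ k.factorial * 2 ^ k * 3 ^ (k + m) * √((k + m).factorial : ℝ) * d ^ m := by
        gcongr
        exact pow_mul_exp_neg_sq_div_two_le_sqrt_factorial _ _

lemma vFun_eq_indicator :
    vFun = (Ioo (-1 : ℝ) 1).indicator fun x : ℝ ↦ (complexBump x).re := by
  funext x
  rw [vFun, indicator_apply]
  congr 1
  rw [complexBump, ← Complex.exp_ofReal_re]
  push_cast
  rfl

lemma contDiffOn_complexBump_re :
    ContDiffOn ℝ ∞ (fun x : ℝ ↦ (complexBump x).re) (Ioo (-1) 1) := fun _ hx ↦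
  (analyticAt_complexBump_ofReal (abs_lt.2 hx)).re_ofReal.contDiffAt.contDiffWithinAt

lemma abs_iteratedDeriv_complexBump_re_le (hx : |x| < 1) (k m : ℕ) :
    |iteratedDeriv k (fun x : ℝ ↦ (complexBump x).re) x| ≤
      k.factorial * 2 ^ k * 3 ^ (k + m) * √((k + m).factorial : ℝ) * (1 - |x|) ^ m := by
  rw [iteratedDeriv_re_ofReal (analyticAt_complexBump_ofReal hx)]
  exact (Complex.abs_re_le_norm _).trans (norm_iteratedDeriv_complexBump_le_mul_pow hx k m)

lemma exists_norm_iteratedDeriv_complexBump_re_le_mul_norm_sub_pow (k m : ℕ) :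
    ∃ C : ℝ, ∀ y ∈ Ioo (-1 : ℝ) 1, ∀ x ∉ Ioo (-1 : ℝ) 1,
      ‖iteratedDeriv k (fun x : ℝ ↦ (complexBump x).re) y‖ ≤ C * ‖y - x‖ ^ m := by
  refine ⟨k.factorial * 2 ^ k * 3 ^ (k + m) * √((k + m).factorial : ℝ), fun y hy x hx ↦
    (abs_iteratedDeriv_complexBump_re_le (abs_lt.2 hy) k m).trans ?_⟩
  have hx1 : 1 ≤ |x| := not_lt.1 fun h ↦ hx (abs_lt.1 h)
  have hy1 : |y| < 1 := abs_lt.2 hy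
  have hdist : 1 - |y| ≤ ‖y - x‖ := by
    rw [norm_sub_rev]
    linarith [abs_sub_abs_le_abs_sub x y, Real.norm_eq_abs (x - y)]
  gcongr

lemma contDiff_vFun : ContDiff ℝ ∞ vFun := by
  rw [vFun_eq_indicator]
  exact contDiff_indicator isOpen_Ioo one_lt_two contDiffOn_complexBump_re
    fun k ↦ exists_norm_iteratedDeriv_complexBump_re_le_mul_norm_sub_pow k 2

lemma iteratedDeriv_vFun (k : ℕ) :
    iteratedDeriv k vFun =
      (Ioo (-1 : ℝ) 1).indicator (iteratedDeriv k fun x : ℝ ↦ (complexBump x).re) := by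
  rw [vFun_eq_indicator]
  exact iteratedDeriv_indicator isOpen_Ioo one_lt_two contDiffOn_complexBump_re
    (fun j ↦ exists_norm_iteratedDeriv_complexBump_re_le_mul_norm_sub_pow j 2) k

lemma support_vFun_subset : Function.support vFun ⊆ Icc (-1) 1 := by
  rw [vFun_eq_indicator]
  exact support_indicator_subset.trans Ioo_subset_Icc_self

lemma abs_iteratedDeriv_vFun_le (k : ℕ) (x : ℝ) :
    |iteratedDeriv k vFun x| ≤ 6 ^ k * (k.factorial : ℝ) ^ (3 / 2 : ℝ) := by
  rw [iteratedDeriv_vFun]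
  by_cases hx : x ∈ Ioo (-1 : ℝ) 1
  · rw [indicator_of_mem hx]
    have hpow : (k.factorial : ℝ) ^ (3 / 2 : ℝ) = k.factorial * √(k.factorial : ℝ) := by
      rw [Real.sqrt_eq_rpow, ← Real.rpow_one_add' (by positivity) (by norm_num)]
      norm_num
    calc |iteratedDeriv k (fun x : ℝ ↦ (complexBump x).re) x|
        ≤ k.factorial * 2 ^ k * 3 ^ k * √(k.factorial : ℝ) := by
          simpa using abs_iteratedDeriv_complexBump_re_le (abs_lt.2 hx) k 0
      _ = 6 ^ k * (k.factorial : ℝ) ^ (3 / 2 : ℝ) := by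
          rw [hpow, show (6 : ℝ) = 2 * 3 by norm_num, mul_pow]
          ring
  · rw [indicator_of_notMem hx, abs_zero]
    positivity

end Bump

/-- **The bump function `v` is Gevrey of class `G^{3/2}_0(1, 2+3√2)`.**
`v` is `C^∞` on `ℝ`, supported in `[-1,1]`, and satisfies
`‖v^(k)‖_∞ ≤ (2+3√2)^k (k!)^{3/2}` for all `k ≥ 0`. -/
theorem stmt18 :
    ContDiff ℝ (⊤ : ℕ∞) vFun ∧
    Function.support vFun ⊆ Set.Icc (-1 : ℝ) 1 ∧
    ∀ k : ℕ, ∀ x : ℝ,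
      |iteratedDeriv k vFun x| ≤ (2 + 3 * Real.sqrt 2) ^ k * (Nat.factorial k : ℝ) ^ ((3 : ℝ) / 2) := by
  refine ⟨contDiff_vFun, support_vFun_subset, fun k x ↦ ?_⟩
  have hconst : (6 : ℝ) ≤ 2 + 3 * √2 := by
    have : (4 / 3 : ℝ) ≤ √2 := Real.le_sqrt_of_sq_le (by norm_num)
    linarith
  exact (abs_iteratedDeriv_vFun_le k x).trans (by gcongr)
end
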